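/- The sequence of rational numbers p_n/q_n converges to ζ(5); more precisely, lim_{n→∞} (log|ζ(5) − p_n/q_n|)/n = log|μ2/μ3|, where μ2 is the root of μ^3+2368μ^2−752μ−16 in (0.337, 0.338) and μ3 is its root in (−2369, −2368) (numerically |μ2/μ3| < 1.42521964·10^{−4}). -/

import Mathlib

noncomputable section

open Filter


/-- `a₀(n)` from recursion (1). -/
def a0 (x : ℚ) : ℚ := 41218*x^3 - 48459*x^2 + 20010*x - 2871

/-- `a₁(n)` from recursion (1). -/
def a1 (x : ℚ) : ℚ := 2*(48802112*x^9 + 89030880*x^8 + 36002654*x^7 - 24317344*x^6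
  - 19538418*x^5 + 1311365*x^4 + 3790503*x^3 + 460056*x^2 - 271701*x - 60291)

/-- `a₂(n)` from recursion (1). -/
def a2 (x : ℚ) : ℚ := 3874492*x^8 - 2617900*x^7 - 3144314*x^6 + 2947148*x^5
  + 647130*x^4 - 1182926*x^3 + 115771*x^2 + 170716*x - 44541

/-- The third-order difference equation (1), imposed for all integers `n ≥ 2`. -/
def Rec1 (y : ℕ → ℚ) : Prop := ∀ n : ℕ, 2 ≤ n →
  ((n : ℚ) + 1)^6 * a0 (n : ℚ) * y (n+1) + a1 (n : ℚ) * y n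
    - 4*(2*(n : ℚ) - 1) * a2 (n : ℚ) * y (n-1)
    - 4*((n : ℚ) - 1)^4*(2*(n : ℚ) - 1)*(2*(n : ℚ) - 3) * a0 ((n : ℚ) + 1) * y (n-2) = 0

/-- The (real) value of the Riemann zeta function at a natural number argument. -/
def zetaRe (s : ℕ) : ℝ := (riemannZeta s).re


lemma contr_tendsto (ρ e : ℕ → ℝ) (κ : ℝ) (hκ0 : 0 ≤ κ) (hκ : κ < 1) (hρ : ∀ n, 0 ≤ ρ n)
    (he : Tendsto e atTop (nhds 0)) (h : ∀ᶠ n in atTop, ρ (n+1) ≤ κ * ρ n + e n) :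
    Tendsto ρ atTop (nhds 0) := by
  rw [Metric.tendsto_atTop]
  intro ε hε
  have hpos : 0 < ε * (1 - κ) / 2 := by
    have : 0 < 1 - κ := by linarith
    positivity
  have he' := he.eventually (gt_mem_nhds hpos)
  obtain ⟨N, hN⟩ := eventually_atTop.1 (h.and he')
  have key : ∀ k, ρ (N + k) ≤ ε / 2 + κ ^ k * ρ N := by
    intro k
    induction k with
    | zero => simp; linarith
    | succ k ih =>
      obtain ⟨h1, h2⟩ := hN (N + k) (by omega)
      have h3 : κ * ρ (N + k) ≤ κ * (ε / 2 + κ ^ k * ρ N) := mul_le_mul_of_nonneg_left ih hκ0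
      rw [← add_assoc, pow_succ]
      nlinarith
  have hk : Tendsto (fun k : ℕ => κ ^ k * ρ N) atTop (nhds (0 * ρ N)) :=
    (tendsto_pow_atTop_nhds_zero_of_lt_one hκ0 hκ).mul_const _
  rw [zero_mul] at hk
  obtain ⟨K, hK⟩ := eventually_atTop.1 (hk.eventually (gt_mem_nhds (half_pos hε)))
  refine ⟨N + K, fun n hn => ?_⟩
  obtain ⟨k, rfl⟩ := Nat.exists_eq_add_of_le (show N ≤ n by omega)
  have := key k
  have := hK k (by omega)
  rw [Real.dist_eq, sub_zero, abs_of_nonneg (hρ _)]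
  linarith

lemma dichotomy (A B δ : ℕ → ℝ) (α β : ℝ) (hβ : 0 ≤ β) (hαβ : β < α)
    (hA : ∀ n, 0 ≤ A n) (hB : ∀ n, 0 ≤ B n) (hδ0 : ∀ n, 0 ≤ δ n)
    (hδ : Tendsto δ atTop (nhds 0))
    (h1 : ∀ᶠ n in atTop, α * A n - δ n * (A n + B n) ≤ A (n+1))
    (h2 : ∀ᶠ n in atTop, B (n+1) ≤ β * B n + δ n * (A n + B n)) :
    (∀ η > 0, ∀ᶠ n in atTop, A n ≤ η * B n) ∨ (∀ η > 0, ∀ᶠ n in atTop, B n ≤ η * A n) := by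
  by_cases hcase : ∀ η > 0, ∀ᶠ n in atTop, A n ≤ η * B n
  · exact Or.inl hcase
  right
  push Not at hcase
  obtain ⟨η, hη, hfreq⟩ := hcase
  set K := 1 + 1 / η with hK
  have hKpos : 0 < K := by positivity
  have hηK : η * K = η + 1 := by rw [hK]; field_simp
  have hδK : Tendsto (fun n => δ n * (K + (η + 1))) atTop (nhds 0) := by
    simpa using hδ.mul_const (K + (η + 1))
  have hgap : 0 < (α - β) / 2 := by linarith
  have hsmall := hδK.eventually (gt_mem_nhds hgap)
  obtain ⟨N, hN⟩ := eventually_atTop.1 ((h1.and h2).and hsmall)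
  obtain ⟨M, hM, hMη⟩ := (frequently_atTop.1 hfreq) N
  have bnd : ∀ n, η * B n ≤ A n → A n + B n ≤ K * A n := by
    intro n h
    have : B n ≤ 1 / η * A n := by
      rw [one_div, inv_mul_eq_div, le_div_iff₀ hη]; linarith
    rw [hK]; linarith
  have inv : ∀ k, η * B (M + k) ≤ A (M + k) := by
    intro k
    induction k with
    | zero => simpa using hMη.le
    | succ k ih =>
      obtain ⟨⟨e1, e2⟩, e3⟩ := hN (M + k) (by omega)
      have hb := bnd _ ih
      have hd := hδ0 (M + k)
      have hA' := hA (M + k)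
      rw [← add_assoc]
      have e4 : δ (M+k) * (A (M+k) + B (M+k)) ≤ δ (M+k) * (K * A (M+k)) :=
        mul_le_mul_of_nonneg_left hb hd
      have e5 : η * B (M+k+1) ≤ β * (η * B (M+k)) + η * (δ (M+k) * (K * A (M+k))) := by
        have := mul_le_mul_of_nonneg_left e2 hη.le
        have := mul_le_mul_of_nonneg_left e4 hη.le
        linarith
      have e6 : β * (η * B (M+k)) ≤ β * A (M+k) := mul_le_mul_of_nonneg_left ih hβ
      have e7 : η * (δ (M+k) * (K * A (M+k))) = δ (M+k) * (η + 1) * A (M+k) := by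
        rw [← hηK]; ring
      have e8 : δ (M+k) * (K + (η+1)) * A (M+k) ≤ (α - β) / 2 * A (M+k) :=
        mul_le_mul_of_nonneg_right e3.le hA'
      have e9 : (α - β) / 2 * A (M+k) ≤ (α - β) * A (M+k) :=
        mul_le_mul_of_nonneg_right (by linarith) hA'
      linarith
  have inv' : ∀ n ≥ M, η * B n ≤ A n := by
    intro n hn
    obtain ⟨k, rfl⟩ := Nat.exists_eq_add_of_le hn
    exact inv k
  set γ := (α + β) / 2 with hγ
  have hγpos : 0 < γ := by linarith
  have hlim : Tendsto (fun n => B n / A n) atTop (nhds 0) := by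
    apply contr_tendsto (fun n => B n / A n) (fun n => δ n * K / γ) (β / γ)
      (by positivity) (by rw [div_lt_one hγpos]; linarith)
      (fun n => div_nonneg (hB n) (hA n))
    · have := (hδ.mul_const K).div_const γ
      simpa using this
    · filter_upwards [eventually_ge_atTop (max M N)] with n hn
      obtain ⟨⟨e1, e2⟩, e3⟩ := hN n (le_trans (le_max_right _ _) hn)
      have hc := inv' n (le_trans (le_max_left _ _) hn)
      have hb := bnd _ hc
      have hd := hδ0 n
      have hA' := hA n
      have e4 : δ n * (A n + B n) ≤ δ n * (K * A n) := mul_le_mul_of_nonneg_left hb hd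
      have hδKn : δ n * K ≤ (α - β) / 2 := by nlinarith
      rcases hA'.eq_or_lt with h0 | hpos
      · have hB0 : B n = 0 := by
          have := hB n
          rw [← h0] at hc
          nlinarith
        have hB1 : B (n+1) = 0 := by
          have := hB (n+1)
          rw [hB0, ← h0] at e2
          simp at e2
          linarith
        rw [hB1]
        have : 0 ≤ B n / A n := div_nonneg (hB n) (hA n)
        have : 0 ≤ β / γ * (B n / A n) + δ n * K / γ := by positivity
        simpa using this
      · have hA1 : γ * A n ≤ A (n+1) := by
          have : δ n * K * A n ≤ (α - β) / 2 * A n := mul_le_mul_of_nonneg_right hδKn hA'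
          rw [hγ]; linarith
        have hA1pos : 0 < γ * A n := by positivity
        have hnum : 0 ≤ β * B n + δ n * (K * A n) := by
          have := hB n
          positivity
        calc B (n+1) / A (n+1) ≤ (β * B n + δ n * (K * A n)) / (γ * A n) := by
              apply div_le_div₀ hnum _ hA1pos hA1
              linarith
          _ = β / γ * (B n / A n) + δ n * K / γ := by field_simp
  intro η' hη'
  filter_upwards [hlim.eventually (gt_mem_nhds hη'), eventually_ge_atTop M] with n h1 h2
  rcases (hA n).eq_or_lt with h0 | hpos
  · have hc := inv' n h2
    rw [← h0] at hc ⊢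
    have := hB n
    nlinarith
  · rw [div_lt_iff₀ hpos] at h1
    exact h1.le

lemma little_div (x z : ℕ → ℝ) (hx : ∀ᶠ n in atTop, x n ≠ 0)
    (h : ∀ η > 0, ∀ᶠ n in atTop, |z n| ≤ η * |x n|) :
    Tendsto (fun n => z n / x n) atTop (nhds 0) := by
  rw [Metric.tendsto_atTop']
  intro ε hε
  obtain ⟨N, hN⟩ := eventually_atTop.1 (hx.and (h (ε/2) (by positivity)))
  refine ⟨N, fun n hn => ?_⟩
  obtain ⟨h1, h2⟩ := hN n hn.le
  have : 0 < |x n| := abs_pos.2 h1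
  rw [Real.dist_eq, sub_zero, abs_div, div_lt_iff₀ this]
  nlinarith

lemma ratio_fin (y x z w : ℕ → ℝ) (c1 c2 c3 m1 m2 m3 : ℝ) (hc1 : c1 ≠ 0)
    (hx : ∀ᶠ n in atTop, x n ≠ 0)
    (hz : ∀ η > 0, ∀ᶠ n in atTop, |z n| ≤ η * |x n|)
    (hw : ∀ η > 0, ∀ᶠ n in atTop, |w n| ≤ η * |x n|)
    (h0 : ∀ n, y n = c1 * x n + c2 * z n + c3 * w n)
    (h1 : ∀ n, y (n+1) = c1 * m1 * x n + c2 * m2 * z n + c3 * m3 * w n) :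
    (∀ᶠ n in atTop, y n ≠ 0) ∧ Tendsto (fun n => y (n+1) / y n) atTop (nhds m1) := by
  have tz := little_div x z hx hz
  have tw := little_div x w hx hw
  have t0 : Tendsto (fun n => c1 + c2 * (z n / x n) + c3 * (w n / x n)) atTop (nhds c1) := by
    have := (tendsto_const_nhds (x := c1)).add (tz.const_mul c2) |>.add (tw.const_mul c3)
    simpa using this
  have t1 : Tendsto (fun n => c1 * m1 + c2 * m2 * (z n / x n) + c3 * m3 * (w n / x n)) atTop
      (nhds (c1 * m1)) := by
    have := (tendsto_const_nhds (x := c1 * m1)).add (tz.const_mul (c2 * m2))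
      |>.add (tw.const_mul (c3 * m3))
    simpa using this
  have hne := t0.eventually (isOpen_ne.mem_nhds hc1)
  have hy : ∀ᶠ n in atTop, y n ≠ 0 := by
    filter_upwards [hx, hne] with n h h'
    intro hy
    apply h'
    have : c1 + c2 * (z n / x n) + c3 * (w n / x n) = y n / x n := by
      rw [h0]; field_simp
    rw [this, hy, zero_div]
  refine ⟨hy, ?_⟩
  have := t1.div t0 hc1
  rw [mul_div_cancel_left₀ _ hc1] at this
  refine this.congr' ?_
  filter_upwards [hx, hy] with n h h'
  have e0 : c1 + c2 * (z n / x n) + c3 * (w n / x n) = y n / x n := by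
    rw [h0]; field_simp
  have e1 : c1 * m1 + c2 * m2 * (z n / x n) + c3 * m3 * (w n / x n) = y (n+1) / x n := by
    rw [h1]; field_simp
  rw [Pi.div_apply, e0, e1]
  field_simp

lemma poincare (y a b c : ℕ → ℝ) (m1 m2 m3 : ℝ) (h12 : |m1| < |m2|) (h23 : |m2| < |m3|)
    (ha : Tendsto a atTop (nhds (m1 + m2 + m3)))
    (hb : Tendsto b atTop (nhds (-(m1*m2 + m1*m3 + m2*m3))))
    (hc : Tendsto c atTop (nhds (m1*m2*m3)))
    (hrec : ∀ n, y (n+3) = a n * y (n+2) + b n * y (n+1) + c n * y n)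
    (hnz : ∀ n, ¬ (y n = 0 ∧ y (n+1) = 0 ∧ y (n+2) = 0)) :
    (∀ᶠ n in atTop, y n ≠ 0) ∧ (Tendsto (fun n => y (n+1) / y n) atTop (nhds m1) ∨
      Tendsto (fun n => y (n+1) / y n) atTop (nhds m2) ∨
      Tendsto (fun n => y (n+1) / y n) atTop (nhds m3)) := by
  have n12 : m1 - m2 ≠ 0 := by intro h; rw [sub_eq_zero.1 h] at h12; exact lt_irrefl _ h12
  have n23 : m2 - m3 ≠ 0 := by intro h; rw [sub_eq_zero.1 h] at h23; exact lt_irrefl _ h23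
  have n13 : m1 - m3 ≠ 0 := by
    intro h; rw [sub_eq_zero.1 h] at h12; exact lt_irrefl _ (h12.trans h23)
  have n21 : m2 - m1 ≠ 0 := by intro h; apply n12; linarith
  have n32 : m3 - m2 ≠ 0 := by intro h; apply n23; linarith
  have n31 : m3 - m1 ≠ 0 := by intro h; apply n13; linarith
  set x1 : ℕ → ℝ := fun n => y (n+2) - (m2+m3) * y (n+1) + m2*m3 * y n with hx1
  set x2 : ℕ → ℝ := fun n => y (n+2) - (m1+m3) * y (n+1) + m1*m3 * y n with hx2
  set x3 : ℕ → ℝ := fun n => y (n+2) - (m1+m2) * y (n+1) + m1*m2 * y n with hx3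
  set c1 := 1 / ((m1 - m2) * (m1 - m3)) with hc1
  set c2 := 1 / ((m2 - m1) * (m2 - m3)) with hc2
  set c3 := 1 / ((m3 - m1) * (m3 - m2)) with hc3
  have y0 : ∀ n, y n = c1 * x1 n + c2 * x2 n + c3 * x3 n := by
    intro n; simp only [hx1, hx2, hx3, hc1, hc2, hc3]; field_simp; ring
  have y1 : ∀ n, y (n+1) = c1 * m1 * x1 n + c2 * m2 * x2 n + c3 * m3 * x3 n := by
    intro n; simp only [hx1, hx2, hx3, hc1, hc2, hc3]; field_simp; ring
  have y2 : ∀ n, y (n+2) = c1 * m1^2 * x1 n + c2 * m2^2 * x2 n + c3 * m3^2 * x3 n := by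
    intro n; simp only [hx1, hx2, hx3, hc1, hc2, hc3]; field_simp; ring
  set eps : ℕ → ℝ := fun n => (a n - (m1+m2+m3)) * y (n+2) + (b n + (m1*m2 + m1*m3 + m2*m3)) * y (n+1)
    + (c n - m1*m2*m3) * y n with heps
  have s1 : ∀ n, x1 (n+1) = m1 * x1 n + eps n := by
    intro n; simp only [hx1, heps]; rw [show n + 1 + 2 = n + 3 by ring, hrec]; ring
  have s2 : ∀ n, x2 (n+1) = m2 * x2 n + eps n := by
    intro n; simp only [hx2, heps]; rw [show n + 1 + 2 = n + 3 by ring, hrec]; ring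
  have s3 : ∀ n, x3 (n+1) = m3 * x3 n + eps n := by
    intro n; simp only [hx3, heps]; rw [show n + 1 + 2 = n + 3 by ring, hrec]; ring
  -- coefficient bounds
  set e1 : ℕ → ℝ := fun n => (a n - (m1+m2+m3)) * (c1*m1^2) + (b n + (m1*m2 + m1*m3 + m2*m3)) * (c1*m1)
    + (c n - m1*m2*m3) * c1 with he1
  set e2 : ℕ → ℝ := fun n => (a n - (m1+m2+m3)) * (c2*m2^2) + (b n + (m1*m2 + m1*m3 + m2*m3)) * (c2*m2)
    + (c n - m1*m2*m3) * c2 with he2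
  set e3 : ℕ → ℝ := fun n => (a n - (m1+m2+m3)) * (c3*m3^2) + (b n + (m1*m2 + m1*m3 + m2*m3)) * (c3*m3)
    + (c n - m1*m2*m3) * c3 with he3
  have epseq : ∀ n, eps n = e1 n * x1 n + e2 n * x2 n + e3 n * x3 n := by
    intro n
    simp only [heps, he1, he2, he3]
    linear_combination (a n - (m1+m2+m3)) * y2 n + (b n + (m1*m2 + m1*m3 + m2*m3)) * y1 n
      + (c n - m1*m2*m3) * y0 n
  have ta : Tendsto (fun n => a n - (m1+m2+m3)) atTop (nhds 0) := by
    simpa using ha.sub_const (m1+m2+m3)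
  have tb : Tendsto (fun n => b n + (m1*m2 + m1*m3 + m2*m3)) atTop (nhds 0) := by
    have := hb.add_const (m1*m2 + m1*m3 + m2*m3)
    rwa [neg_add_cancel] at this
  have tc : Tendsto (fun n => c n - m1*m2*m3) atTop (nhds 0) := by
    simpa using hc.sub_const (m1*m2*m3)
  have te : ∀ u v w : ℝ, Tendsto (fun n => (a n - (m1+m2+m3)) * u
      + (b n + (m1*m2 + m1*m3 + m2*m3)) * v + (c n - m1*m2*m3) * w) atTop (nhds 0) := by
    intro u v w
    have := ((ta.mul_const u).add (tb.mul_const v)).add (tc.mul_const w)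
    simpa using this
  set δ : ℕ → ℝ := fun n => |e1 n| + |e2 n| + |e3 n| with hδ
  have hδ0 : ∀ n, 0 ≤ δ n := fun n => by simp only [hδ]; positivity
  have tδ : Tendsto δ atTop (nhds 0) := by
    have := ((te (c1*m1^2) (c1*m1) c1).abs.add (te (c2*m2^2) (c2*m2) c2).abs).add
      (te (c3*m3^2) (c3*m3) c3).abs
    simpa using this
  have epsb : ∀ n, |eps n| ≤ δ n * (|x1 n| + |x2 n| + |x3 n|) := by
    intro n
    rw [epseq n]
    have h1 := abs_add_three (e1 n * x1 n) (e2 n * x2 n) (e3 n * x3 n)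
    rw [abs_mul, abs_mul, abs_mul] at h1
    simp only [hδ]
    have := abs_nonneg (e1 n); have := abs_nonneg (e2 n); have := abs_nonneg (e3 n)
    have := abs_nonneg (x1 n); have := abs_nonneg (x2 n); have := abs_nonneg (x3 n)
    refine h1.trans ?_
    have : 0 ≤ |e1 n| * |x2 n| + |e1 n| * |x3 n| + |e2 n| * |x1 n| + |e2 n| * |x3 n|
      + |e3 n| * |x1 n| + |e3 n| * |x2 n| := by positivity
    linarith
  have lo : ∀ m u e : ℝ, |m| * |u| - |e| ≤ |m * u + e| := by
    intro m u e
    have := abs_sub_abs_le_abs_sub (m * u) (-e)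
    rw [abs_mul, abs_neg, sub_neg_eq_add] at this
    exact this
  have hi : ∀ m u e : ℝ, |m * u + e| ≤ |m| * |u| + |e| := by
    intro m u e
    have := abs_add_le (m * u) e
    rwa [abs_mul] at this
  have c1ne : c1 ≠ 0 := by rw [hc1]; exact one_div_ne_zero (mul_ne_zero n12 n13)
  have c2ne : c2 ≠ 0 := by rw [hc2]; exact one_div_ne_zero (mul_ne_zero n21 n23)
  have c3ne : c3 ≠ 0 := by rw [hc3]; exact one_div_ne_zero (mul_ne_zero n31 n32)
  have nz : ∀ n, ¬ (x1 n = 0 ∧ x2 n = 0 ∧ x3 n = 0) := by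
    rintro n ⟨h1, h2, h3⟩
    apply hnz n
    rw [y0, y1, y2, h1, h2, h3]; simp
  have t2δ : Tendsto (fun n => 2 * δ n) atTop (nhds 0) := by simpa using tδ.const_mul 2
  have m2nn := abs_nonneg m2
  have m1nn := abs_nonneg m1
  rcases dichotomy (fun n => |x3 n|) (fun n => |x1 n| + |x2 n|) (fun n => 2 * δ n) |m3| |m2| m2nn h23
    (fun n => abs_nonneg _) (fun n => by positivity) (fun n => by have := hδ0 n; positivity) t2δ
    (Eventually.of_forall fun n => by
      have h1 := epsb n
      have h2 := lo m3 (x3 n) (eps n)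
      have h4 := hδ0 n
      have : 0 ≤ δ n * (|x1 n| + |x2 n| + |x3 n|) := by positivity
      simp only [s3 n]
      linarith)
    (Eventually.of_forall fun n => by
      have h1 := epsb n
      have h2 := hi m2 (x2 n) (eps n)
      have h3 := hi m1 (x1 n) (eps n)
      have h5 : |m1| * |x1 n| ≤ |m2| * |x1 n| := mul_le_mul_of_nonneg_right h12.le (abs_nonneg _)
      simp only [s1 n, s2 n]
      linarith) with hX | hX
  · -- x3 negligible
    have h3ev := hX 1 one_pos
    rcases dichotomy (fun n => |x2 n|) (fun n => |x1 n|) (fun n => 2 * δ n) |m2| |m1| m1nn h12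
      (fun n => abs_nonneg _) (fun n => abs_nonneg _) (fun n => by have := hδ0 n; positivity) t2δ
      (by
        filter_upwards [h3ev] with n h
        have h1 := epsb n
        have h2 := lo m2 (x2 n) (eps n)
        have h4 : δ n * (|x1 n| + |x2 n| + |x3 n|) ≤ δ n * (2 * (|x2 n| + |x1 n|)) :=
          mul_le_mul_of_nonneg_left (by linarith) (hδ0 n)
        simp only [s2 n]
        linarith)
      (by
        filter_upwards [h3ev] with n h
        have h1 := epsb n
        have h2 := hi m1 (x1 n) (eps n)
        have h4 : δ n * (|x1 n| + |x2 n| + |x3 n|) ≤ δ n * (2 * (|x2 n| + |x1 n|)) :=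
          mul_le_mul_of_nonneg_left (by linarith) (hδ0 n)
        simp only [s1 n]
        linarith) with hY | hY
    · -- x1 dominant
      have hw : ∀ η > 0, ∀ᶠ n in atTop, |x3 n| ≤ η * |x1 n| := by
        intro η hη
        filter_upwards [hX (η/2) (by positivity), hY 1 one_pos] with n h1 h2
        nlinarith
      have hx : ∀ᶠ n in atTop, x1 n ≠ 0 := by
        filter_upwards [hw 1 one_pos, hY 1 one_pos] with n h1 h2 h0
        rw [h0] at h1 h2
        simp at h1 h2
        exact nz n ⟨h0, h2, h1⟩
      obtain ⟨r1, r2⟩ := ratio_fin y x1 x2 x3 c1 c2 c3 m1 m2 m3 c1ne hx hY hw y0 y1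
      exact ⟨r1, Or.inl r2⟩
    · have hw : ∀ η > 0, ∀ᶠ n in atTop, |x3 n| ≤ η * |x2 n| := by
        intro η hη
        filter_upwards [hX (η/2) (by positivity), hY 1 one_pos] with n h1 h2
        nlinarith
      have hx : ∀ᶠ n in atTop, x2 n ≠ 0 := by
        filter_upwards [hw 1 one_pos, hY 1 one_pos] with n h1 h2 h0
        rw [h0] at h1 h2
        simp at h1 h2
        exact nz n ⟨h2, h0, h1⟩
      obtain ⟨r1, r2⟩ := ratio_fin y x2 x1 x3 c2 c1 c3 m2 m1 m3 c2ne hx hY hw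
        (fun n => by rw [y0]; ring) (fun n => by rw [y1]; ring)
      exact ⟨r1, Or.inr (Or.inl r2)⟩
  · have hz : ∀ η > 0, ∀ᶠ n in atTop, |x1 n| ≤ η * |x3 n| := by
      intro η hη
      filter_upwards [hX η hη] with n h1
      have := abs_nonneg (x2 n); linarith
    have hw : ∀ η > 0, ∀ᶠ n in atTop, |x2 n| ≤ η * |x3 n| := by
      intro η hη
      filter_upwards [hX η hη] with n h1
      have := abs_nonneg (x1 n); linarith
    have hx : ∀ᶠ n in atTop, x3 n ≠ 0 := by
      filter_upwards [hz 1 one_pos, hw 1 one_pos] with n h1 h2 h0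
      rw [h0] at h1 h2
      simp at h1 h2
      exact nz n ⟨h1, h2, h0⟩
    obtain ⟨r1, r2⟩ := ratio_fin y x3 x1 x2 c3 c1 c2 m3 m1 m2 c3ne hx hz hw
        (fun n => by rw [y0]; ring) (fun n => by rw [y1]; ring)
    exact ⟨r1, Or.inr (Or.inr r2)⟩

lemma log_growth (y : ℕ → ℝ) (m : ℝ) (hm : m ≠ 0) (hy : ∀ᶠ n in atTop, y n ≠ 0)
    (h : Tendsto (fun n => y (n+1) / y n) atTop (nhds m)) :
    Tendsto (fun n : ℕ => Real.log |y n| / (n : ℝ)) atTop (nhds (Real.log |m|)) := by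
  have h1 : Tendsto (fun n => Real.log |y (n+1) / y n|) atTop (nhds (Real.log |m|)) :=
    h.abs.log (abs_ne_zero.2 hm)
  have h2 : Tendsto (fun n => Real.log |y (n+1)| - Real.log |y n|) atTop (nhds (Real.log |m|)) := by
    refine h1.congr' ?_
    obtain ⟨N, hN⟩ := eventually_atTop.1 hy
    filter_upwards [eventually_ge_atTop N] with n hn
    rw [abs_div, Real.log_div (abs_ne_zero.2 (hN _ (by omega))) (abs_ne_zero.2 (hN _ hn))]
  have h3 := h2.cesaro
  have h4 : Tendsto (fun n : ℕ => Real.log |y 0| / (n:ℝ)) atTop (nhds 0) :=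
    tendsto_const_div_atTop_nhds_zero_nat _
  have h5 := h3.add h4
  rw [add_zero] at h5
  refine h5.congr fun n => ?_
  rw [Finset.sum_range_sub (fun i => Real.log |y i|)]
  ring

/-- Hypergeometric kernel; `t = k + 1` is the summation variable. -/
def GG (n k : ℕ) : ℝ := (n.factorial : ℝ)^4 * (k.descFactorial n : ℝ) * ((k+1+2*n).factorial : ℝ)
  * (k.factorial : ℝ)^6 / ((k+1+n).factorial : ℝ)^7

lemma descF_succ (n k : ℕ) :
    ((k.descFactorial (n+1) : ℕ) : ℝ) = ((k:ℝ) - n) * (k.descFactorial n : ℝ) := by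
  rw [Nat.descFactorial_succ]
  rcases le_or_gt n k with h | h
  · push_cast [Nat.cast_sub h]; ring
  · rw [Nat.descFactorial_of_lt h]; simp

lemma GG_k (n k : ℕ) : ((k:ℝ) + 1 - n) * GG n (k+1)
    = GG n k * ((k:ℝ)+1)^7 * (k+2+2*n) / (k+2+n)^7 := by
  have h1 : ((k:ℝ) + 1 - n) * ((k+1).descFactorial n : ℝ) = (k+1) * (k.descFactorial n : ℝ) := by
    have := descF_succ n (k+1)
    rw [Nat.succ_descFactorial_succ] at this
    push_cast at this
    linarith
  unfold GG
  rw [show k + 1 + 1 + 2 * n = (k+1+2*n) + 1 by ring, show k + 1 + 1 + n = (k+1+n) + 1 by ring,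
    Nat.factorial_succ, Nat.factorial_succ, Nat.factorial_succ]
  push_cast
  have p1 : ((k+1+n).factorial : ℝ) ≠ 0 := by positivity
  have p2 : ((k:ℝ)+2+n) ≠ 0 := by positivity
  have p3 : ((k:ℝ)+1+n+1) ≠ 0 := by positivity
  rw [show ((k:ℝ) + 2 + n) = k+1+n+1 by ring, show ((k:ℝ) + 2 + 2*n) = k+1+2*n+1 by ring]
  rw [mul_div_assoc', div_mul_eq_mul_div, div_mul_eq_mul_div, div_div]
  rw [mul_pow ((k:ℝ)+1+n+1), mul_comm (((k:ℝ)+1+n+1)^7)]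
  congr 1
  linear_combination ((n.factorial:ℝ)^4 * ((k+1+2*n+1) * ((k+1+2*n).factorial:ℝ))
    * ((k+1) * (k.factorial:ℝ))^6) * h1

lemma GG_n (n k : ℕ) : GG (n+1) k
    = GG n k * ((n+1)^4 * ((k:ℝ) - n) * (k+2+2*n) * (k+3+2*n) / (k+2+n)^7) := by
  unfold GG
  rw [descF_succ, show k + 1 + 2 * (n+1) = (k+1+2*n) + 1 + 1 by ring,
    show k + 1 + (n + 1) = (k+1+n) + 1 by ring,
    Nat.factorial_succ, Nat.factorial_succ, Nat.factorial_succ, Nat.factorial_succ]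
  push_cast
  have p1 : ((k+1+n).factorial : ℝ) ≠ 0 := by positivity
  have p2 : ((k:ℝ)+2+n) ≠ 0 := by positivity
  have p3 : ((k:ℝ)+1+n+1) ≠ 0 := by positivity
  rw [show ((k:ℝ) + 2 + n) = k+1+n+1 by ring]
  field_simp
  ring

lemma GG_nonneg (n k : ℕ) : 0 ≤ GG n k := by unfold GG; positivity

lemma GG_lt (n k : ℕ) (h : k < n) : GG n k = 0 := by
  unfold GG; rw [Nat.descFactorial_of_lt h]; simp

lemma GG_one (k : ℕ) : GG 1 k ≤ 1 / ((k:ℝ)+1)^10 := by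
  have h0 : GG 0 k = ((k:ℝ)+1)⁻¹^6 := by
    unfold GG
    have p1 : (k.factorial : ℝ) ≠ 0 := by positivity
    have p2 : ((k:ℝ)+1) ≠ 0 := by positivity
    simp only [Nat.factorial_zero, Nat.descFactorial_zero, mul_zero, add_zero, Nat.factorial_succ]
    push_cast
    field_simp
  have h1 := GG_n 0 k
  rw [h0] at h1
  simp only [zero_add] at h1
  rw [h1]
  have p2 : 0 < ((k:ℝ)+1) := by positivity
  have p3 : 0 < ((k:ℝ)+2) := by positivity
  have hk : (0:ℝ) ≤ k := by positivity
  push_cast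
  have : ((k:ℝ)+1)⁻¹^6 * ((0+1)^4 * ((k:ℝ) - 0) * (k+2+2*0) * (k+3+2*0) / (k+2+0)^7)
      = ((k:ℝ) * (k+3)) / ((k+1)^6 * (k+2)^6) := by
    field_simp; ring
  rw [this, div_le_div_iff₀ (by positivity) (by positivity)]
  have e1 : (k:ℝ) * (k+3) ≤ (k+1)*(k+2) := by nlinarith
  have e2 : ((k:ℝ)+1)^5 ≤ (k+2)^5 := by gcongr; linarith
  calc (k:ℝ) * (k+3) * (k+1)^10 ≤ (k+1)*(k+2) * (k+1)^10 := by gcongr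
    _ = ((k:ℝ)+1)^6 * (k+2) * (k+1)^5 := by ring
    _ ≤ ((k:ℝ)+1)^6 * (k+2) * (k+2)^5 := by gcongr
    _ = _ := by ring

lemma GG_bound (n k : ℕ) : GG (n+1) k ≤ 1 / ((k:ℝ)+1)^10 := by
  induction n with
  | zero => simpa using GG_one k
  | succ n ih =>
    rcases lt_or_ge k (n+1) with h | h
    · rw [GG_lt _ _ (by omega)]; positivity
    refine le_trans ?_ ih
    rw [GG_n (n+1) k]
    apply mul_le_of_le_one_right (GG_nonneg _ _)
    have hk : ((n+1 : ℕ):ℝ) ≤ k := by exact_mod_cast h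
    set N : ℝ := ((n+1 : ℕ):ℝ) with hN
    have hN0 : 0 ≤ N := by positivity
    set K : ℝ := (k:ℝ)
    rw [div_le_one (by positivity)]
    have f1 : (N+1) ≤ (K+2+N)/2 := by linarith
    have f2 : K - N ≤ K+2+N := by linarith
    have f3 : K+2+2*N ≤ 2*(K+2+N) := by linarith
    have f4 : K+3+2*N ≤ 2*(K+2+N) := by linarith
    have f5 : 0 ≤ K - N := by linarith
    have f6 : 0 ≤ K := by linarith
    calc (N+1)^4 * (K-N) * (K+2+2*N) * (K+3+2*N)
        ≤ ((K+2+N)/2)^4 * (K+2+N) * (2*(K+2+N)) * (2*(K+2+N)) := by gcongr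
      _ = (K+2+N)^7 * (1/4) := by ring
      _ ≤ (K+2+N)^7 := by
        have : 0 ≤ (K+2+N)^7 := by positivity
        linarith

/-- Summand with `x = t (t+n)`. -/
def rt (n j k : ℕ) : ℝ := (2*((k:ℝ)+1)+n) * (((k:ℝ)+1)*(k+1+n))^j * GG n k

lemma rt_nonneg (n j k : ℕ) : 0 ≤ rt n j k := by
  unfold rt; have := GG_nonneg n k; positivity

lemma rt_bound (n j k : ℕ) (hj : j ≤ 2) : rt (n+1) j k ≤ 12 * (1 / ((k:ℝ)+1)^2) := by
  rcases lt_or_ge k (n+1) with h | h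
  · unfold rt; rw [GG_lt _ _ h]; simp; positivity
  have hk : ((n+1 : ℕ):ℝ) ≤ k := by exact_mod_cast h
  unfold rt
  set N : ℝ := ((n+1 : ℕ):ℝ) with hN
  have hN0 : 0 ≤ N := by positivity
  have f1 : 2*((k:ℝ)+1)+N ≤ 3*(k+1) := by linarith
  have f2 : ((k:ℝ)+1)*(k+1+N) ≤ 2*(k+1)^2 := by nlinarith
  have f3 : 1 ≤ 2*((k:ℝ)+1)^2 := by
    have : (0:ℝ) ≤ k := by positivity
    nlinarith
  have f0 := GG_nonneg (n+1) k
  have hf : (1:ℝ) ≤ ((k:ℝ)+1)^3 := by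
    apply one_le_pow₀; have : (0:ℝ) ≤ k := by positivity
    linarith
  calc (2*((k:ℝ)+1)+N) * (((k:ℝ)+1)*(k+1+N))^j * GG (n+1) k
      ≤ (3*(k+1)) * (2*((k:ℝ)+1)^2)^j * (1 / ((k:ℝ)+1)^10) := by
        gcongr
        exact GG_bound n k
    _ ≤ (3*(k+1)) * (2*((k:ℝ)+1)^2)^2 * (1 / ((k:ℝ)+1)^10) := by
        gcongr
    _ = 12 * (1 / ((k:ℝ)+1)^2) * (1 / ((k:ℝ)+1)^3) := by field_simp; ring
    _ ≤ 12 * (1 / ((k:ℝ)+1)^2) * 1 := by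
        gcongr
        rw [div_le_one (by positivity)]; exact hf
    _ = _ := by ring

lemma summ_sq : Summable (fun k : ℕ => 12 * (1 / ((k:ℝ)+1)^2)) := by
  apply Summable.mul_left
  have := (summable_nat_add_iff 1).2 (Real.summable_one_div_nat_pow.2 (one_lt_two))
  simpa using this

lemma rt_summable (n j : ℕ) (hj : j ≤ 2) : Summable (rt (n+1) j) :=
  Summable.of_nonneg_of_le (fun k => rt_nonneg _ _ _) (fun k => rt_bound n j k hj) summ_sq

def rr (j n : ℕ) : ℝ := ∑' k, rt n j k

lemma rr_bound (j n : ℕ) (hj : j ≤ 2) : |rr j (n+1)| ≤ ∑' k : ℕ, 12 * (1 / ((k:ℝ)+1)^2) := by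
  unfold rr
  rw [abs_of_nonneg (tsum_nonneg fun k => rt_nonneg _ _ _)]
  exact (rt_summable n j hj).tsum_le_tsum (fun k => rt_bound n j k hj) summ_sq

/-- Telescoping with an arbitrary degree-5 certificate. -/
lemma telesc (s0 s1 s2 s3 s4 s5 : ℝ) (n : ℕ) :
    HasSum (fun k : ℕ =>
      (s0 + s1*(k+2) + s2*(k+2)^2 + s3*(k+2)^3 + s4*(k+2)^4 + s5*((k:ℝ)+2)^5)
        * (((k:ℝ)+1-(n+1 : ℕ)) * GG (n+1) (k+1))
      - (s0 + s1*(k+1) + s2*(k+1)^2 + s3*(k+1)^3 + s4*(k+1)^4 + s5*((k:ℝ)+1)^5)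
        * (((k:ℝ)-(n+1 : ℕ)) * GG (n+1) k)) 0 := by
  set S : ℕ → ℝ := fun k =>
    (s0 + s1*(k+1) + s2*(k+1)^2 + s3*(k+1)^3 + s4*(k+1)^4 + s5*((k:ℝ)+1)^5)
        * (((k:ℝ)-(n+1 : ℕ)) * GG (n+1) k) with hS
  have hS0 : S 0 = 0 := by simp only [hS]; rw [GG_lt _ _ (by omega)]; simp
  set C := |s0| + |s1| + |s2| + |s3| + |s4| + |s5| with hC
  have hb : ∀ k, |S k| ≤ C * (1 / ((k:ℝ)+1)^2) := by
    intro k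
    rcases lt_or_ge k (n+1) with h | h
    · simp only [hS]; rw [GG_lt _ _ h]; simp; positivity
    have hk : ((n+1 : ℕ):ℝ) ≤ k := by exact_mod_cast h
    have hN0 : (0:ℝ) ≤ ((n+1 : ℕ):ℝ) := by positivity
    simp only [hS]
    set N : ℝ := ((n+1 : ℕ):ℝ) with hN
    have ht : (1:ℝ) ≤ (k:ℝ)+1 := by linarith
    set t : ℝ := (k:ℝ)+1 with ht'
    have f0 := GG_nonneg (n+1) k
    have fG := GG_bound n k
    rw [← ht'] at fG
    rw [abs_mul, abs_mul, abs_of_nonneg f0, abs_of_nonneg (by linarith : 0 ≤ (k:ℝ) - N)]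
    have tp : ∀ i, i ≤ 5 → t^i ≤ t^5 := fun i hi => pow_le_pow_right₀ ht hi
    have t0 : 0 ≤ t := by linarith
    have A : |s0 + s1*t + s2*t^2 + s3*t^3 + s4*t^4 + s5*t^5| ≤ C * t^5 := by
      have q0 : |s0| ≤ |s0| * t^5 := le_mul_of_one_le_right (abs_nonneg _) (one_le_pow₀ ht)
      have q1 : |s1*t| ≤ |s1| * t^5 := by
        rw [abs_mul, abs_of_nonneg t0]
        have := tp 1 (by norm_num)
        rw [pow_one] at this
        gcongr
      have q : ∀ (s : ℝ) (i : ℕ), i ≤ 5 → |s*t^i| ≤ |s| * t^5 := by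
        intro s i hi
        rw [abs_mul, abs_of_nonneg (pow_nonneg t0 i)]
        have := tp i hi
        gcongr
      have q2 := q s2 2 (by norm_num)
      have q3 := q s3 3 (by norm_num)
      have q4 := q s4 4 (by norm_num)
      have q5 := q s5 5 (by norm_num)
      have w1 := abs_add_le (s0 + s1*t + s2*t^2 + s3*t^3 + s4*t^4) (s5*t^5)
      have w2 := abs_add_le (s0 + s1*t + s2*t^2 + s3*t^3) (s4*t^4)
      have w3 := abs_add_le (s0 + s1*t + s2*t^2) (s3*t^3)
      have w4 := abs_add_le (s0 + s1*t) (s2*t^2)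
      have w5 := abs_add_le (s0) (s1*t)
      rw [hC]
      linarith
    have hC0 : 0 ≤ C := by positivity
    calc _ ≤ (C * t^5) * (t * (1 / t^10)) := by
          gcongr
          linarith
      _ = C * (1 / t^2) * (1 / t^2) := by field_simp
      _ ≤ C * (1 / t^2) * 1 := by
          gcongr
          rw [div_le_one (by positivity)]
          exact one_le_pow₀ ht
      _ = _ := by ring
  have hlim2 : Tendsto (fun k : ℕ => C * (1 / ((k:ℝ)+1)^2)) atTop (nhds 0) := by
    have := summ_sq.tendsto_atTop_zero.const_mul (C/12)
    rw [mul_zero] at this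
    refine this.congr fun k => ?_
    ring
  have hlim : Tendsto S atTop (nhds 0) := squeeze_zero_norm (fun k => by simpa using hb k) hlim2
  have hsS : Summable S := by
    refine Summable.of_norm_bounded (g := fun k : ℕ => C * (1 / ((k:ℝ)+1)^2)) ?_
      (fun k => by simpa using hb k)
    have := summ_sq.mul_left (C/12)
    refine this.congr fun k => ?_
    ring
  have hs1 : Summable (fun k => S (k+1)) := (summable_nat_add_iff 1).2 hsS
  have hd : HasSum (fun k => S (k+1) - S k) 0 := by
    have h1 := hs1.hasSum.sub hsS.hasSum
    have h2 := hsS.tsum_eq_zero_add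
    rw [hS0, zero_add] at h2
    rw [h2, sub_self] at h1
    exact h1
  refine hd.congr_fun ?_ 
  intro k
  simp only [hS]
  push_cast
  ring

/-- The first-order system satisfied by the three sums. -/
def Sys (x y z : ℕ → ℝ) : Prop := ∀ n : ℕ, 1 ≤ n →
  ((n:ℝ)+1)^5 * x (n+1) = (302*n^5 + 662*n^4 + 575*n^3 + 283*n^2 + 77*n + 9) * x n
    + (262*n^3 + 557*n^2 + 230*n + 33) * y n + (-196*n) * z n ∧
  ((n:ℝ)+1)^3 * y (n+1) = (-98*n^5 - 208*n^4 - 170*n^3 - 77*n^2 - 19*n - 2) * x n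
    + (-90*n^3 - 192*n^2 - 81*n - 12) * y n + (66*n) * z n ∧
  ((n:ℝ)+1) * z (n+1) = (33*n^5 + 65*n^4 + 45*n^3 + 15*n^2 + 2*n) * x n
    + (34*n^3 + 73*n^2 + 32*n + 5) * y n + (-24*n) * z n

lemma rr_sys : Sys (rr 0) (rr 1) (rr 2) := by
  intro n hn
  obtain ⟨n, rfl⟩ := Nat.exists_eq_add_of_le' hn
  have S : ∀ j, j ≤ 2 → HasSum (rt (n+1) j) (rr j (n+1)) := fun j hj => (rt_summable n j hj).hasSum
  have S' : ∀ j, j ≤ 2 → HasSum (rt (n+1+1) j) (rr j (n+1+1)) :=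
    fun j hj => (rt_summable (n+1) j hj).hasSum
  have gk := GG_k (n+1)
  have gn := GG_n (n+1)
  have T := fun s0 s1 s2 s3 s4 s5 => telesc s0 s1 s2 s3 s4 s5 n
  have hNk : ∀ k : ℕ, ((k:ℝ) + 2 + (n+1:ℕ)) ≠ 0 := fun k => by positivity
  set N : ℝ := ((n+1 : ℕ):ℝ) with hN
  have hN1 : (((n+1+1 : ℕ)):ℝ) = N + 1 := by rw [hN]; push_cast; ring
  refine ⟨?_, ?_, ?_⟩
  · have h1 := ((S' 0 (by norm_num)).mul_left ((N+1)^5)).sub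
      ((((S 0 (by norm_num)).mul_left (302*N^5 + 662*N^4 + 575*N^3 + 283*N^2 + 77*N + 9)).add
      ((S 1 (by norm_num)).mul_left (262*N^3 + 557*N^2 + 230*N + 33))).add
      ((S 2 (by norm_num)).mul_left (-196*N)))
    have h2 := T (-306*N^5 -378*N^4 -247*N^3 -96*N^2 -21*N -2) (-1152*N^4 -1018*N^3 -453*N^2 -108*N -11)
      (-1795*N^3 -1074*N^2 -291*N -32) (-1437*N^2 -522*N -65) (-588*N -98) (-98)
    have h3 := h1.unique (h2.congr_fun ?_)
    · linarith
    intro k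
    simp only [rt]
    rw [gk, gn, hN1]
    have := hNk k
    field_simp
    ring
  · have h1 := ((S' 1 (by norm_num)).mul_left ((N+1)^3)).sub
      ((((S 0 (by norm_num)).mul_left (-98*N^5 - 208*N^4 - 170*N^3 - 77*N^2 - 19*N - 2)).add
      ((S 1 (by norm_num)).mul_left (-90*N^3 - 192*N^2 - 81*N - 12))).add
      ((S 2 (by norm_num)).mul_left (66*N)))
    have h2 := T (98*N^5 + 110*N^4 + 60*N^3 + 17*N^2 + 2*N) (380*N^4 + 320*N^3 + 129*N^2 + 26*N + 2)
      (600*N^3 + 351*N^2 + 90*N + 9) (483*N^2 + 174*N + 21) (198*N + 33) 33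
    have h3 := h1.unique (h2.congr_fun ?_)
    · linarith
    intro k
    simp only [rt]
    rw [gk, gn, hN1]
    have := hNk k
    field_simp
    ring
  · have h1 := ((S' 2 (by norm_num)).mul_left ((N+1))).sub
      ((((S 0 (by norm_num)).mul_left (33*N^5 + 65*N^4 + 45*N^3 + 15*N^2 + 2*N)).add
      ((S 1 (by norm_num)).mul_left (34*N^3 + 73*N^2 + 32*N + 5))).add
      ((S 2 (by norm_num)).mul_left (-24*N)))
    have h2 := T (-33*N^5 -32*N^4 -13*N^3 -2*N^2) (-133*N^4 -102*N^3 -33*N^2 -4*N)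
      (-215*N^3 -120*N^2 -27*N -2) (-175*N^2 -62*N -7) (-72*N -12) (-12)
    have h3 := h1.unique (h2.congr_fun ?_)
    · linarith
    intro k
    simp only [rt]
    rw [gk, gn, hN1]
    have := hNk k
    field_simp
    ring
/-! Wedge products of two solutions of the system. -/

def pXX (n : ℝ) : ℝ := (n+1)^2*(-42-398*n-1492*n^2-2466*n^3-1504*n^4)
def pXY (n : ℝ) : ℝ := n*(n+1)*(202+752*n+724*n^2)
def pXZ (n : ℝ) : ℝ := -174*n*(2*n+1)
def pYX (n : ℝ) : ℝ := (n+1)^2*(45+427*n+1603*n^2+2655*n^3+1622*n^4)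
def pYY (n : ℝ) : ℝ := n*(n+1)*(-216-808*n-780*n^2)
def pYZ (n : ℝ) : ℝ := 188*n*(2*n+1)
def pZX (n : ℝ) : ℝ := (n+1)^2*(-10-95*n-357*n^2-592*n^3-362*n^4)
def pZY (n : ℝ) : ℝ := n*(n+1)*(48+180*n+174*n^2)
def pZZ (n : ℝ) : ℝ := -42*n*(2*n+1)

def b0 (x : ℝ) : ℝ := 41218*x^3 - 48459*x^2 + 20010*x - 2871
def b1 (x : ℝ) : ℝ := 2*(48802112*x^9 + 89030880*x^8 + 36002654*x^7 - 24317344*x^6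
  - 19538418*x^5 + 1311365*x^4 + 3790503*x^3 + 460056*x^2 - 271701*x - 60291)
def b2 (x : ℝ) : ℝ := 3874492*x^8 - 2617900*x^7 - 3144314*x^6 + 2947148*x^5
  + 647130*x^4 - 1182926*x^3 + 115771*x^2 + 170716*x - 44541

/-- Real form of the recursion, for indices `m ≥ 1`, `n = m + 2`. -/
def RecR (y : ℕ → ℝ) : Prop := ∀ m : ℕ, 1 ≤ m →
  ((m:ℝ)+3)^6 * b0 (m+2) * y (m+3) + b1 (m+2) * y (m+2)
    - 4*(2*((m:ℝ)+2) - 1) * b2 (m+2) * y (m+1)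
    - 4*((m:ℝ)+1)^4*(2*((m:ℝ)+2) - 1)*(2*((m:ℝ)+2) - 3) * b0 (m+3) * y m = 0

lemma recR_of_rec1 (y : ℕ → ℚ) (h : Rec1 y) : RecR (fun n => (y n : ℝ)) := by
  intro m _
  have := h (m+2) (by omega)
  simp only [a0, a1, a2, show m + 2 - 1 = m + 1 by omega, show m + 2 - 2 = m by omega,
    show m + 2 + 1 = m + 3 by omega] at this
  have h2 := congrArg (fun x : ℚ => (x : ℝ)) this
  push_cast at h2
  simp only [b0, b1, b2]
  linear_combination h2

lemma wedge_step (x y z x' y' z' : ℕ → ℝ) (h : Sys x y z) (h' : Sys x' y' z') (n : ℕ) (hn : 1 ≤ n) :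
    ((n:ℝ)+1)^6 * (x (n+1) * y' (n+1) - y (n+1) * x' (n+1)) =
      pXX n * (x n * y' n - y n * x' n) + pXY n * (x n * z' n - z n * x' n)
      + pXZ n * (y n * z' n - z n * y' n) ∧
    ((n:ℝ)+1)^4 * (x (n+1) * z' (n+1) - z (n+1) * x' (n+1)) =
      pYX n * (x n * y' n - y n * x' n) + pYY n * (x n * z' n - z n * x' n)
      + pYZ n * (y n * z' n - z n * y' n) ∧
    ((n:ℝ)+1)^2 * (y (n+1) * z' (n+1) - z (n+1) * y' (n+1)) =
      pZX n * (x n * y' n - y n * x' n) + pZY n * (x n * z' n - z n * x' n)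
      + pZZ n * (y n * z' n - z n * y' n) := by
  obtain ⟨e1, e2, e3⟩ := h n hn
  obtain ⟨f1, f2, f3⟩ := h' n hn
  have hp : ((n:ℝ)+1)^2 ≠ 0 := by positivity
  simp only [pXX, pXY, pXZ, pYX, pYY, pYZ, pZX, pZY, pZZ]
  generalize (n:ℝ) = N at *
  refine ⟨?_, ?_, ?_⟩
  · apply mul_left_cancel₀ hp
    have g1 := congrArg₂ (· * ·) e1 f2
    have g2 := congrArg₂ (· * ·) e2 f1
    linear_combination g1 - g2
  · apply mul_left_cancel₀ hp
    have g1 := congrArg₂ (· * ·) e1 f3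
    have g2 := congrArg₂ (· * ·) e3 f1
    linear_combination g1 - g2
  · apply mul_left_cancel₀ hp
    have g1 := congrArg₂ (· * ·) e2 f3
    have g2 := congrArg₂ (· * ·) e3 f2
    linear_combination g1 - g2

lemma wedge_rec_aux (N X0 Y0 Z0 X1 Y1 Z1 X2 Y2 Z2 X3 : ℝ) (hN1 : N ≠ 0) (hN2 : N - 1 ≠ 0)
    (e1 : (N-2+1)^6 * X1 = pXX (N-2) * X0 + pXY (N-2) * Y0 + pXZ (N-2) * Z0)
    (e2 : (N-2+1)^4 * Y1 = pYX (N-2) * X0 + pYY (N-2) * Y0 + pYZ (N-2) * Z0)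
    (e3 : (N-2+1)^2 * Z1 = pZX (N-2) * X0 + pZY (N-2) * Y0 + pZZ (N-2) * Z0)
    (f1 : (N-1+1)^6 * X2 = pXX (N-1) * X1 + pXY (N-1) * Y1 + pXZ (N-1) * Z1)
    (f2 : (N-1+1)^4 * Y2 = pYX (N-1) * X1 + pYY (N-1) * Y1 + pYZ (N-1) * Z1)
    (f3 : (N-1+1)^2 * Z2 = pZX (N-1) * X1 + pZY (N-1) * Y1 + pZZ (N-1) * Z1)
    (g1 : (N+1)^6 * X3 = pXX N * X2 + pXY N * Y2 + pXZ N * Z2) :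
    (N+1)^6 * b0 N * X3 + b1 N * X2 - 4*(2*N-1) * b2 N * X1
      - 4*(N-1)^4*(2*N-1)*(2*N-3) * b0 (N+1) * X0 = 0 := by
  have h1 : N^6 * ((N+1)^6 * b0 N * X3 + b1 N * X2 - 4*(2*N-1) * b2 N * X1
      - 4*(N-1)^4*(2*N-1)*(2*N-3) * b0 (N+1) * X0)
      = (b0 N * (pXX N * pXX (N-1) + N^2 * pXY N * pYX (N-1) + N^4 * pXZ N * pZX (N-1))
          + b1 N * pXX (N-1) - N^6 * (4*(2*N-1) * b2 N)) * X1
      + (b0 N * (pXX N * pXY (N-1) + N^2 * pXY N * pYY (N-1) + N^4 * pXZ N * pZY (N-1))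
          + b1 N * pXY (N-1)) * Y1
      + (b0 N * (pXX N * pXZ (N-1) + N^2 * pXY N * pYZ (N-1) + N^4 * pXZ N * pZZ (N-1))
          + b1 N * pXZ (N-1)) * Z1
      - N^6 * (4*(N-1)^4*(2*N-1)*(2*N-3) * b0 (N+1)) * X0 := by
    rw [sub_add_cancel] at f1 f2 f3
    linear_combination N^6 * b0 N * g1 + (b0 N * pXX N + b1 N) * f1 + b0 N * pXY N * N^2 * f2
      + b0 N * pXZ N * N^4 * f3
  have h2 : (N-1)^6 * (N^6 * ((N+1)^6 * b0 N * X3 + b1 N * X2 - 4*(2*N-1) * b2 N * X1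
      - 4*(N-1)^4*(2*N-1)*(2*N-3) * b0 (N+1) * X0)) = 0 := by
    rw [h1]
    rw [show N - 2 + 1 = N - 1 by ring] at e1 e2 e3
    set CX := (b0 N * (pXX N * pXX (N-1) + N^2 * pXY N * pYX (N-1) + N^4 * pXZ N * pZX (N-1))
          + b1 N * pXX (N-1) - N^6 * (4*(2*N-1) * b2 N)) with hCX
    set CY := (b0 N * (pXX N * pXY (N-1) + N^2 * pXY N * pYY (N-1) + N^4 * pXZ N * pZY (N-1))
          + b1 N * pXY (N-1)) with hCY
    set CZ := (b0 N * (pXX N * pXZ (N-1) + N^2 * pXY N * pYZ (N-1) + N^4 * pXZ N * pZZ (N-1))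
          + b1 N * pXZ (N-1)) with hCZ
    have kX : CX * pXX (N-2) + (N-1)^2 * CY * pYX (N-2) + (N-1)^4 * CZ * pZX (N-2)
        - (N-1)^6 * (N^6 * (4*(N-1)^4*(2*N-1)*(2*N-3) * b0 (N+1))) = 0 := by
      simp only [hCX, hCY, hCZ, b0, b1, b2, pXX, pXY, pXZ, pYX, pYY, pYZ, pZX, pZY, pZZ]
      ring
    have kY : CX * pXY (N-2) + (N-1)^2 * CY * pYY (N-2) + (N-1)^4 * CZ * pZY (N-2) = 0 := by
      simp only [hCX, hCY, hCZ, b0, b1, b2, pXX, pXY, pXZ, pYX, pYY, pYZ, pZX, pZY, pZZ]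
      ring
    have kZ : CX * pXZ (N-2) + (N-1)^2 * CY * pYZ (N-2) + (N-1)^4 * CZ * pZZ (N-2) = 0 := by
      simp only [hCX, hCY, hCZ, b0, b1, b2, pXX, pXY, pXZ, pYX, pYY, pYZ, pZX, pZY, pZZ]
      ring
    linear_combination CX * e1 + CY * (N-1)^2 * e2 + CZ * (N-1)^4 * e3 + X0 * kX + Y0 * kY + Z0 * kZ
  rcases mul_eq_zero.1 h2 with h | h
  · exact absurd h (pow_ne_zero _ hN2)
  rcases mul_eq_zero.1 h with h | h
  · exact absurd h (pow_ne_zero _ hN1)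
  exact h

lemma wedge_rec (x y z x' y' z' : ℕ → ℝ) (h : Sys x y z) (h' : Sys x' y' z') :
    RecR (fun n => -1/4 * (x n * y' n - y n * x' n)) := by
  intro m hm
  obtain ⟨e1, e2, e3⟩ := wedge_step x y z x' y' z' h h' m hm
  obtain ⟨f1, f2, f3⟩ := wedge_step x y z x' y' z' h h' (m+1) (by omega)
  obtain ⟨g1, -, -⟩ := wedge_step x y z x' y' z' h h' (m+2) (by omega)
  push_cast at f1 f2 f3 g1
  have := wedge_rec_aux ((m:ℝ)+2) _ _ _ _ _ _ _ _ _ _ (by positivity)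
    (by rw [show (m:ℝ)+2-1 = m+1 by ring]; positivity)
    (by rw [show (m:ℝ)+2-2 = m by ring]; exact e1) (by rw [show (m:ℝ)+2-2 = m by ring]; exact e2)
    (by rw [show (m:ℝ)+2-2 = m by ring]; exact e3)
    (by rw [show (m:ℝ)+2-1 = m+1 by ring]; exact f1) (by rw [show (m:ℝ)+2-1 = m+1 by ring]; exact f2)
    (by rw [show (m:ℝ)+2-1 = m+1 by ring]; exact f3) g1
  rw [show (m:ℝ)+2+1 = m+3 by ring, show (m:ℝ)+2-1 = m+1 by ring] at this
  linear_combination (-1/4) * this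

/-! Initial values. -/

lemma zeta5_hasSum : HasSum (fun k : ℕ => 1 / ((k:ℝ)+1)^5) (zetaRe 5) := by
  have hs : Summable (fun k : ℕ => 1 / (k:ℝ)^5) := Real.summable_one_div_nat_pow.2 (by norm_num)
  have h1 : riemannZeta (5:ℕ) = ((∑' k : ℕ, 1 / (k:ℝ)^5 : ℝ) : ℂ) := by
    rw [zeta_nat_eq_tsum_of_gt_one (by norm_num)]
    push_cast
    rfl
  have h2 : zetaRe 5 = ∑' k : ℕ, 1 / (k:ℝ)^5 := by
    unfold zetaRe; rw [h1, Complex.ofReal_re]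
  rw [h2]
  have h3 := (hasSum_nat_add_iff' 1).2 hs.hasSum
  simpa using h3

def z3 : ℝ := ∑' k : ℕ, 1 / ((k:ℝ)+1)^3

lemma summ_shift (i : ℕ) (hi : 2 ≤ i) : Summable (fun k : ℕ => 1 / ((k:ℝ)+1)^i) := by
  have := (summable_nat_add_iff 1).2 (Real.summable_one_div_nat_pow.2 (show 1 < i by omega))
  simpa using this

lemma tele_pow (i : ℕ) (hi : 2 ≤ i) :
    HasSum (fun k : ℕ => 1 / ((k:ℝ)+2)^i - 1 / ((k:ℝ)+1)^i) (-1) := by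
  have hs := summ_shift i hi
  have h1 := (hasSum_nat_add_iff' 1).2 hs.hasSum
  have h2 := h1.sub hs.hasSum
  simp only [Finset.sum_range_one, Nat.cast_zero, zero_add, one_pow, div_one] at h2
  rw [show ∑' (k : ℕ), 1 / ((k:ℝ) + 1) ^ i - 1 - ∑' (k : ℕ), 1 / ((k:ℝ) + 1) ^ i = -1 by ring] at h2
  refine h2.congr_fun fun k => ?_
  push_cast
  ring_nf

lemma GG_one_eq (k : ℕ) : GG 1 k = ((k:ℝ) * (k+3)) / ((k+1)^6 * (k+2)^6) := by
  have h0 : GG 0 k = ((k:ℝ)+1)⁻¹^6 := by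
    unfold GG
    have p1 : (k.factorial : ℝ) ≠ 0 := by positivity
    have p2 : ((k:ℝ)+1) ≠ 0 := by positivity
    simp only [Nat.factorial_zero, Nat.descFactorial_zero, mul_zero, add_zero, Nat.factorial_succ]
    push_cast
    field_simp
  have h1 := GG_n 0 k
  rw [h0] at h1
  simp only [zero_add] at h1
  rw [h1]
  have p2 : 0 < ((k:ℝ)+1) := by positivity
  have p3 : 0 < ((k:ℝ)+2) := by positivity
  push_cast
  field_simp
  ring

lemma rr0_one : rr 0 1 = 18 * zetaRe 5 + 66 * z3 - 98 := by
  have h5 := zeta5_hasSum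
  have h3 : HasSum (fun k : ℕ => 1 / ((k:ℝ)+1)^3) z3 := (summ_shift 3 (by norm_num)).hasSum
  have H := (((((((h5.mul_left 18).add (h3.mul_left 66)).add
    ((tele_pow 2 (by norm_num)).mul_left 33)).add ((tele_pow 3 (by norm_num)).mul_left 33)).add
    ((tele_pow 4 (by norm_num)).mul_left 21)).add ((tele_pow 5 (by norm_num)).mul_left 9)).add
    ((tele_pow 6 (by norm_num)).mul_left 2))
  have := (rt_summable 0 0 (by norm_num)).hasSum.unique (H.congr_fun fun k => ?_)
  · unfold rr; rw [this]; ring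
  · simp only [rt, zero_add, GG_one_eq]
    have p2 : ((k:ℝ)+1) ≠ 0 := by positivity
    have p3 : ((k:ℝ)+2) ≠ 0 := by positivity
    push_cast
    field_simp
    ring

lemma rr1_one : rr 1 1 = -4 * zetaRe 5 - 24 * z3 + 33 := by
  have h5 := zeta5_hasSum
  have h3 : HasSum (fun k : ℕ => 1 / ((k:ℝ)+1)^3) z3 := (summ_shift 3 (by norm_num)).hasSum
  have H := ((((((h5.mul_left (-4)).add (h3.mul_left (-24))).add
    ((tele_pow 2 (by norm_num)).mul_left (-12))).add ((tele_pow 3 (by norm_num)).mul_left (-12))).add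
    ((tele_pow 4 (by norm_num)).mul_left (-7))).add ((tele_pow 5 (by norm_num)).mul_left (-2)))
  have := (rt_summable 0 1 (by norm_num)).hasSum.unique (H.congr_fun fun k => ?_)
  · unfold rr; rw [this]; ring
  · simp only [rt, zero_add, GG_one_eq]
    have p2 : ((k:ℝ)+1) ≠ 0 := by positivity
    have p3 : ((k:ℝ)+2) ≠ 0 := by positivity
    push_cast
    field_simp
    ring

lemma rr2_one : rr 2 1 = 10 * z3 - 12 := by
  have h3 : HasSum (fun k : ℕ => 1 / ((k:ℝ)+1)^3) z3 := (summ_shift 3 (by norm_num)).hasSum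
  have H := ((((h3.mul_left 10).add
    ((tele_pow 2 (by norm_num)).mul_left 5)).add ((tele_pow 3 (by norm_num)).mul_left 5)).add
    ((tele_pow 4 (by norm_num)).mul_left 2))
  have := (rt_summable 0 2 (by norm_num)).hasSum.unique (H.congr_fun fun k => ?_)
  · unfold rr; rw [this]; ring
  · simp only [rt, zero_add, GG_one_eq]
    have p2 : ((k:ℝ)+1) ≠ 0 := by positivity
    have p3 : ((k:ℝ)+2) ≠ 0 := by positivity
    push_cast
    field_simp
    ring

/-- Solution of the system with prescribed value at index `1`. -/
def vec (i : ℝ × ℝ × ℝ) : ℕ → ℝ × ℝ × ℝ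
  | 0 => i
  | n+1 => if n = 0 then i else
    (((302*(n:ℝ)^5 + 662*n^4 + 575*n^3 + 283*n^2 + 77*n + 9) * (vec i n).1
      + (262*(n:ℝ)^3 + 557*n^2 + 230*n + 33) * (vec i n).2.1 + (-196*n) * (vec i n).2.2) / ((n:ℝ)+1)^5,
     ((-98*(n:ℝ)^5 - 208*n^4 - 170*n^3 - 77*n^2 - 19*n - 2) * (vec i n).1
      + (-90*(n:ℝ)^3 - 192*n^2 - 81*n - 12) * (vec i n).2.1 + (66*n) * (vec i n).2.2) / ((n:ℝ)+1)^3,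
     ((33*(n:ℝ)^5 + 65*n^4 + 45*n^3 + 15*n^2 + 2*n) * (vec i n).1
      + (34*(n:ℝ)^3 + 73*n^2 + 32*n + 5) * (vec i n).2.1 + (-24*n) * (vec i n).2.2) / ((n:ℝ)+1))

lemma vec_one (i : ℝ × ℝ × ℝ) : vec i 1 = i := by simp [vec]

lemma vec_sys (i : ℝ × ℝ × ℝ) :
    Sys (fun n => (vec i n).1) (fun n => (vec i n).2.1) (fun n => (vec i n).2.2) := by
  intro n hn
  simp only [vec, if_neg (show ¬ n = 0 by omega)]
  have p : ((n:ℝ)+1) ≠ 0 := by positivity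
  refine ⟨?_, ?_, ?_⟩
  · rw [mul_div_cancel₀ _ (pow_ne_zero _ p)]
  · rw [mul_div_cancel₀ _ (pow_ne_zero _ p)]
  · rw [mul_div_cancel₀ _ p]

lemma sys_unique (x y z x' y' z' : ℕ → ℝ) (h : Sys x y z) (h' : Sys x' y' z')
    (hx : x 1 = x' 1) (hy : y 1 = y' 1) (hz : z 1 = z' 1) (n : ℕ) :
    x (n+1) = x' (n+1) ∧ y (n+1) = y' (n+1) ∧ z (n+1) = z' (n+1) := by
  induction n with
  | zero => exact ⟨hx, hy, hz⟩
  | succ n ih =>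
    obtain ⟨i1, i2, i3⟩ := ih
    obtain ⟨e1, e2, e3⟩ := h (n+1) (by omega)
    obtain ⟨f1, f2, f3⟩ := h' (n+1) (by omega)
    have p : (((n+1:ℕ):ℝ)+1) ≠ 0 := by positivity
    rw [i1, i2, i3] at e1 e2 e3
    exact ⟨mul_left_cancel₀ (pow_ne_zero _ p) (e1.trans f1.symm),
      mul_left_cancel₀ (pow_ne_zero _ p) (e2.trans f2.symm), mul_left_cancel₀ p (e3.trans f3.symm)⟩

lemma sys_bound (x y z : ℕ → ℝ) (h : Sys x y z) (C : ℝ) (hC : 0 ≤ C)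
    (hx : |x 1| ≤ C) (hy : |y 1| ≤ C) (hz : |z 1| ≤ C) (n : ℕ) :
    |x (n+1)| ≤ C * 1000^n ∧ |y (n+1)| ≤ C * ((n:ℝ)+1)^2 * 1000^n ∧
      |z (n+1)| ≤ C * ((n:ℝ)+1)^4 * 1000^n := by
  induction n with
  | zero => simpa using ⟨hx, hy, hz⟩
  | succ n ih =>
    obtain ⟨i1, i2, i3⟩ := ih
    obtain ⟨e1, e2, e3⟩ := h (n+1) (by omega)
    have hN1 : ((n+1:ℕ):ℝ) = (n:ℝ) + 1 := by push_cast; ring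
    rw [hN1] at e1 e2 e3 ⊢
    have hN : (0:ℝ) ≤ (n:ℝ)+1 := by positivity
    generalize (n:ℝ)+1 = N at *
    have hD : 0 ≤ C * 1000^n := by positivity
    rw [mul_right_comm] at i2 i3
    rw [show C * 1000^(n+1) = C * 1000^n * 1000 by ring,
      show C * (N+1)^2 * 1000^(n+1) = C * 1000^n * (1000 * (N+1)^2) by ring,
      show C * (N+1)^4 * 1000^(n+1) = C * 1000^n * (1000 * (N+1)^4) by ring]
    set D := C * 1000^n with hDdef
    have gen : ∀ (a b c : ℝ) (k : ℕ) (v B : ℝ), 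
        (N+1)^k * v = a * x (n+1) + b * y (n+1) + c * z (n+1) → ∀ a' b' c' : ℝ, 
        |a| ≤ a' → |b| ≤ b' → |c| ≤ c' →
        0 ≤ (N+1)^k * B - (a' + b' * N^2 + c' * N^4) → |v| ≤ D * B := by
      intro a b c k v B he a' b' c' ha hb hc hle
      have hp : 0 < (N+1)^k := by positivity
      have h1 : (N+1)^k * |v| = |a * x (n+1) + b * y (n+1) + c * z (n+1)| := by
        rw [← he, abs_mul, abs_of_pos hp]
      have h2 := abs_add_three (a * x (n+1)) (b * y (n+1)) (c * z (n+1))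
      rw [abs_mul, abs_mul, abs_mul] at h2
      have h3 : |a| * |x (n+1)| ≤ a' * D :=
        mul_le_mul ha i1 (abs_nonneg _) ((abs_nonneg _).trans ha)
      have h4 : |b| * |y (n+1)| ≤ b' * (D * N^2) :=
        mul_le_mul hb i2 (abs_nonneg _) ((abs_nonneg _).trans hb)
      have h5 : |c| * |z (n+1)| ≤ c' * (D * N^4) :=
        mul_le_mul hc i3 (abs_nonneg _) ((abs_nonneg _).trans hc)
      have h7 := mul_nonneg hD hle
      have h6 : (N+1)^k * |v| ≤ (N+1)^k * (D * B) := by linarith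
      exact le_of_mul_le_mul_left h6 hp
    refine ⟨gen _ _ _ 5 _ _ e1 (302*N^5 + 662*N^4 + 575*N^3 + 283*N^2 + 77*N + 9)
        (262*N^3 + 557*N^2 + 230*N + 33) (196*N) ?_ ?_ ?_ ?_,
      gen _ _ _ 3 _ _ e2 (98*N^5 + 208*N^4 + 170*N^3 + 77*N^2 + 19*N + 2)
        (90*N^3 + 192*N^2 + 81*N + 12) (66*N) ?_ ?_ ?_ ?_,
      gen _ _ _ 1 _ _ (by rw [pow_one]; exact e3) (33*N^5 + 65*N^4 + 45*N^3 + 15*N^2 + 2*N)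
        (34*N^3 + 73*N^2 + 32*N + 5) (24*N) ?_ ?_ ?_ ?_⟩
    all_goals first
      | (rw [abs_of_nonneg (by positivity)])
      | (rw [abs_of_nonpos (by rw [← neg_nonneg]; ring_nf; positivity)]; apply le_of_eq; ring)
      | (ring_nf; positivity)
/-! The recursion: uniqueness, coefficient limits. -/

lemma b0_pos (x : ℝ) (hx : 1 ≤ x) : 0 < b0 x := by
  obtain ⟨t, ht, rfl⟩ : ∃ t : ℝ, 0 ≤ t ∧ x = t + 1 := ⟨x - 1, by linarith, by ring⟩
  unfold b0; ring_nf; positivity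

lemma recR_unique (y y' : ℕ → ℝ) (h : RecR y) (h' : RecR y') (h1 : y 1 = y' 1)
    (h2 : y 2 = y' 2) (h3 : y 3 = y' 3) (n : ℕ) :
    y (n+1) = y' (n+1) ∧ y (n+2) = y' (n+2) ∧ y (n+3) = y' (n+3) := by
  induction n with
  | zero => exact ⟨h1, h2, h3⟩
  | succ n ih =>
    obtain ⟨i1, i2, i3⟩ := ih
    refine ⟨i2, i3, ?_⟩
    have e := h (n+1) (by omega)
    have e' := h' (n+1) (by omega)
    have r1 : n + 1 + 1 = n + 2 := rfl
    have r2 : n + 1 + 2 = n + 3 := rfl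
    rw [r1, r2, i1, i2, i3] at e
    rw [r1, r2] at e'
    have p1 : 0 < (((n+1:ℕ):ℝ)+3)^6 * b0 (((n+1:ℕ):ℝ)+2) :=
      mul_pos (by positivity) (b0_pos _ (by push_cast; linarith [n.cast_nonneg (α := ℝ)]))
    exact mul_left_cancel₀ p1.ne' (by linarith)

/-- Coefficients of the normalized recursion. -/
def cA (n : ℕ) : ℝ := -b1 (n+3) / (((n:ℝ)+4)^6 * b0 (n+3))
def cB (n : ℕ) : ℝ := 4*(2*((n:ℝ)+3) - 1) * b2 (n+3) / (((n:ℝ)+4)^6 * b0 (n+3))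
def cC (n : ℕ) : ℝ := 4*((n:ℝ)+2)^4*(2*((n:ℝ)+3) - 1)*(2*((n:ℝ)+3) - 3) * b0 (n+4)
  / (((n:ℝ)+4)^6 * b0 (n+3))

lemma den_pos (n : ℕ) : 0 < ((n:ℝ)+4)^6 * b0 (n+3) :=
  mul_pos (by positivity) (b0_pos _ (by linarith [n.cast_nonneg (α := ℝ)]))

lemma recR_norm (y : ℕ → ℝ) (h : RecR y) (n : ℕ) :
    y (n+3+1) = cA n * y (n+2+1) + cB n * y (n+1+1) + cC n * y (n+1) := by
  have e := h (n+1) (by omega)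
  have p := den_pos n
  push_cast at e
  rw [show (n:ℝ)+1+3 = n+4 by ring, show (n:ℝ)+1+2 = n+3 by ring, show (n:ℝ)+1+1 = n+2 by ring] at e
  apply mul_left_cancel₀ p.ne'
  have qA : ((n:ℝ)+4)^6 * b0 (n+3) * cA n = -b1 (n+3) := mul_div_cancel₀ _ p.ne'
  have qB : ((n:ℝ)+4)^6 * b0 (n+3) * cB n = 4*(2*((n:ℝ)+3) - 1) * b2 (n+3) :=
    mul_div_cancel₀ _ p.ne'
  have qC : ((n:ℝ)+4)^6 * b0 (n+3) * cC n =
    4*((n:ℝ)+2)^4*(2*((n:ℝ)+3) - 1)*(2*((n:ℝ)+3) - 3) * b0 (n+4) := mul_div_cancel₀ _ p.ne'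
  have r1 : n + 1 + 1 = n + 2 := rfl
  have r2 : n + 1 + 2 = n + 2 + 1 := rfl
  have r3 : n + 1 + 3 = n + 3 + 1 := rfl
  rw [r3, r2, r1] at e
  rw [r1]
  linear_combination e + y (n+2+1) * (-qA) - y (n+2) * qB - y (n+1) * qC

lemma cC_pos (n : ℕ) : 0 < cC n := by
  have h := n.cast_nonneg (α := ℝ)
  apply div_pos _ (den_pos n)
  have h1 : 0 < b0 ((n:ℝ)+4) := b0_pos _ (by linarith)
  have h2 : 0 < 2*((n:ℝ)+3) - 1 := by linarith
  have h3 : 0 < 2*((n:ℝ)+3) - 3 := by linarith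
  positivity

lemma inv_tendsto : Tendsto (fun n : ℕ => ((n:ℝ)+3)⁻¹) atTop (nhds 0) :=
  tendsto_inv_atTop_zero.comp (tendsto_atTop_add_const_right _ _ tendsto_natCast_atTop_atTop)

lemma den_eq (x : ℝ) (hx : x ≠ 0) : (x+1)^6 * b0 x =
    x^9 * ((1+x⁻¹)^6 * (41218 - 48459*x⁻¹ + 20010*x⁻¹^2 - 2871*x⁻¹^3)) := by
  unfold b0; field_simp

lemma cA_tendsto : Tendsto cA atTop (nhds (-2368)) := by
  let f : ℝ → ℝ := fun u => -(2*(48802112 + 89030880*u + 36002654*u^2 - 24317344*u^3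
    - 19538418*u^4 + 1311365*u^5 + 3790503*u^6 + 460056*u^7 - 271701*u^8 - 60291*u^9)) /
    ((1+u)^6 * (41218 - 48459*u + 20010*u^2 - 2871*u^3))
  have hf : ContinuousAt f 0 := by
    apply ContinuousAt.div
    · fun_prop
    · fun_prop
    · norm_num
  have h0 : f 0 = -2368 := by simp only [f]; norm_num
  have h := (hf.tendsto).comp inv_tendsto
  rw [h0] at h
  refine h.congr fun n => ?_
  have p : ((n:ℝ)+3) ≠ 0 := by positivity
  have hd := den_pos n
  simp only [Function.comp, f, cA]
  rw [show (n:ℝ)+4 = n+3+1 by ring] at hd ⊢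
  generalize (n:ℝ)+3 = x at *
  have hn : -b1 x = x^9 * (-(2*(48802112 + 89030880*x⁻¹ + 36002654*x⁻¹^2 - 24317344*x⁻¹^3
    - 19538418*x⁻¹^4 + 1311365*x⁻¹^5 + 3790503*x⁻¹^6 + 460056*x⁻¹^7 - 271701*x⁻¹^8
    - 60291*x⁻¹^9))) := by
    unfold b1; field_simp
  rw [hn, den_eq x p, mul_div_mul_left _ _ (pow_ne_zero _ p)]

lemma cB_tendsto : Tendsto cB atTop (nhds 752) := by
  let f : ℝ → ℝ := fun u => (4*(2-u)*(3874492 - 2617900*u - 3144314*u^2 + 2947148*u^3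
    + 647130*u^4 - 1182926*u^5 + 115771*u^6 + 170716*u^7 - 44541*u^8)) /
    ((1+u)^6 * (41218 - 48459*u + 20010*u^2 - 2871*u^3))
  have hf : ContinuousAt f 0 := by
    apply ContinuousAt.div
    · fun_prop
    · fun_prop
    · norm_num
  have h0 : f 0 = 752 := by simp only [f]; norm_num
  have h := (hf.tendsto).comp inv_tendsto
  rw [h0] at h
  refine h.congr fun n => ?_
  have p : ((n:ℝ)+3) ≠ 0 := by positivity
  have hd := den_pos n
  simp only [Function.comp, f, cB]
  rw [show (n:ℝ)+4 = n+3+1 by ring] at hd ⊢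
  generalize (n:ℝ)+3 = x at *
  have hn : 4*(2*x-1)*b2 x = x^9 * (4*(2-x⁻¹)*(3874492 - 2617900*x⁻¹ - 3144314*x⁻¹^2
    + 2947148*x⁻¹^3 + 647130*x⁻¹^4 - 1182926*x⁻¹^5 + 115771*x⁻¹^6 + 170716*x⁻¹^7
    - 44541*x⁻¹^8)) := by
    unfold b2; field_simp
  rw [hn, den_eq x p, mul_div_mul_left _ _ (pow_ne_zero _ p)]

lemma cC_tendsto : Tendsto cC atTop (nhds 16) := by
  let f : ℝ → ℝ := fun u => (4*(1-u)^4*(2-u)*(2-3*u)*(41218*(1+u)^3 - 48459*u*(1+u)^2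
    + 20010*u^2*(1+u) - 2871*u^3)) /
    ((1+u)^6 * (41218 - 48459*u + 20010*u^2 - 2871*u^3))
  have hf : ContinuousAt f 0 := by
    apply ContinuousAt.div
    · fun_prop
    · fun_prop
    · norm_num
  have h0 : f 0 = 16 := by simp only [f]; norm_num
  have h := (hf.tendsto).comp inv_tendsto
  rw [h0] at h
  refine h.congr fun n => ?_
  have p : ((n:ℝ)+3) ≠ 0 := by positivity
  have hd := den_pos n
  simp only [Function.comp, f, cC]
  rw [show (n:ℝ)+4 = n+3+1 by ring, show (n:ℝ)+2 = n+3-1 by ring] at *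
  generalize (n:ℝ)+3 = x at *
  have hn : 4*(x-1)^4*(2*x-1)*(2*x-3)*b0 (x+1) = x^9 * (4*(1-x⁻¹)^4*(2-x⁻¹)*(2-3*x⁻¹)*
    (41218*(1+x⁻¹)^3 - 48459*x⁻¹*(1+x⁻¹)^2 + 20010*x⁻¹^2*(1+x⁻¹) - 2871*x⁻¹^3)) := by
    unfold b0; field_simp
  rw [hn, den_eq x p, mul_div_mul_left _ _ (pow_ne_zero _ p)]

/-- Poincaré's theorem for the recursion. -/
lemma recR_poincare (y : ℕ → ℝ) (h : RecR y) (hy : y 1 ≠ 0) (m1 m2 m3 : ℝ)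
    (h12 : |m1| < |m2|) (h23 : |m2| < |m3|) (s1 : m1+m2+m3 = -2368)
    (s2 : m1*m2+m1*m3+m2*m3 = -752) (s3 : m1*m2*m3 = 16) :
    (∀ᶠ n in atTop, y (n+1) ≠ 0) ∧
    (Tendsto (fun n => y (n+1+1) / y (n+1)) atTop (nhds m1) ∨
     Tendsto (fun n => y (n+1+1) / y (n+1)) atTop (nhds m2) ∨
     Tendsto (fun n => y (n+1+1) / y (n+1)) atTop (nhds m3)) := by
  have hrec := recR_norm y h
  refine poincare (fun n => y (n+1)) cA cB cC m1 m2 m3 h12 h23 (by rw [s1]; exact cA_tendsto)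
    (by rw [s2, neg_neg]; exact cB_tendsto) (by rw [s3]; exact cC_tendsto) hrec ?_
  intro n
  induction n with
  | zero => exact fun hh => hy hh.1
  | succ n ih =>
    rintro ⟨h1, h2, h3⟩
    apply ih
    refine ⟨?_, h1, h2⟩
    have e := hrec n
    have r3 : n + 1 + 2 + 1 = n + 3 + 1 := rfl
    have r2 : n + 1 + 1 + 1 = n + 2 + 1 := rfl
    rw [r3] at h3
    rw [r2] at h2
    rw [h1, h2, h3] at e
    have := (cC_pos n).ne'
    simpa [this] using e
/-! Excluding the wrong growth rates. -/

lemma poly_pos (m : ℕ) (hm : 1 ≤ m) :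
    0 < ((m:ℝ)+3)^6 * b0 (m+2) ∧ 0 ≤ 4*(2*((m:ℝ)+2) - 1) * b2 (m+2) ∧
    0 < 4*((m:ℝ)+1)^4*(2*((m:ℝ)+2) - 1)*(2*((m:ℝ)+2) - 3) * b0 (m+3) ∧ 0 ≤ b1 (m+2) ∧
    0 ≤ b1 (m+2) - (4*(2*((m:ℝ)+2) - 1) * b2 (m+2))/10
      - (4*((m:ℝ)+1)^4*(2*((m:ℝ)+2) - 1)*(2*((m:ℝ)+2) - 3) * b0 (m+3))/100
      - 10 * (((m:ℝ)+3)^6 * b0 (m+2)) ∧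
    0 ≤ 4*(2*((m:ℝ)+2) - 1) * b2 (m+2) - (((m:ℝ)+3)^6 * b0 (m+2))/100
      - 10 * (4*((m:ℝ)+1)^4*(2*((m:ℝ)+2) - 1)*(2*((m:ℝ)+2) - 3) * b0 (m+3)) := by
  obtain ⟨t, rfl⟩ := Nat.exists_eq_add_of_le' hm
  push_cast
  have ht := t.cast_nonneg (α := ℝ)
  generalize (t:ℝ) = s at *
  unfold b0 b1 b2
  refine ⟨?_, ?_, ?_, ?_, ?_, ?_⟩ <;> (ring_nf; positivity)

lemma growth_step (A E D B y0 y1 y2 y3 : ℝ) (hA : 0 < A) (hE : 0 ≤ E) (hD : 0 ≤ D) (hB : 0 ≤ B)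
    (hp : 0 ≤ B - E/10 - D/100 - 10*A) (h : A * y3 + B * y2 - E * y1 - D * y0 = 0)
    (h0 : 10 * |y0| ≤ |y1|) (h1 : 10 * |y1| ≤ |y2|) : 10 * |y2| ≤ |y3| := by
  have e : B * y2 = E * y1 + D * y0 + -(A * y3) := by linarith
  have h2 : B * |y2| ≤ E * |y1| + D * |y0| + A * |y3| := by
    calc B * |y2| = |B * y2| := by rw [abs_mul, abs_of_nonneg hB]
      _ ≤ |E * y1| + |D * y0| + |-(A * y3)| := by rw [e]; exact abs_add_three _ _ _
      _ = _ := by rw [abs_neg, abs_mul, abs_mul, abs_mul, abs_of_nonneg hE, abs_of_nonneg hD,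
                    abs_of_pos hA]
  have h3 : E * |y1| ≤ E * (|y2|/10) := mul_le_mul_of_nonneg_left (by linarith) hE
  have h4 : D * |y0| ≤ D * (|y2|/100) := mul_le_mul_of_nonneg_left (by linarith) hD
  have h5 := mul_nonneg hp (abs_nonneg y2)
  have h6 : A * (10 * |y2|) ≤ A * |y3| := by linarith
  exact le_of_mul_le_mul_left h6 hA

lemma growth (y : ℕ → ℝ) (h : RecR y) (h1 : 10 * |y 1| ≤ |y 2|) (h2 : 10 * |y 2| ≤ |y 3|) (n : ℕ) :
    10 * |y (n+1)| ≤ |y (n+2)| ∧ 10 * |y (n+2)| ≤ |y (n+3)| := by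
  induction n with
  | zero => exact ⟨h1, h2⟩
  | succ n ih =>
    refine ⟨ih.2, ?_⟩
    obtain ⟨p1, p2, p3, p4, p5, p6⟩ := poly_pos (n+1) (by omega)
    exact growth_step _ _ _ _ _ _ _ _ p1 p2 p3.le p4 p5 (h (n+1) (by omega)) ih.1 ih.2

/-- Alternating signs and fast decay. -/
def Cone (a b : ℝ) : Prop := a * b ≤ 0 ∧ 10 * |b| ≤ |a|

lemma cone_neg (a b : ℝ) (h : Cone a b) : Cone (-a) (-b) := by
  unfold Cone at *; simpa using h

lemma cone_step_pos (A E D B y0 y1 y2 y3 : ℝ) (hA : 0 < A) (hD : 0 < D) (hB : 0 ≤ B)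
    (hp : 0 ≤ E - A/100 - 10*D) (h : A * y3 + B * y2 - E * y1 - D * y0 = 0)
    (c1 : Cone y1 y2) (c2 : Cone y2 y3) (hy : 0 < y1) : Cone y0 y1 := by
  have k1 : y2 ≤ 0 := by
    by_contra hh
    push Not at hh
    exact absurd c1.1 (not_le.2 (mul_pos hy hh))
  have k2 : y3 ≤ y1/100 := by
    have := c1.2; have := c2.2
    rw [abs_of_pos hy] at *
    linarith [le_abs_self y3]
  have k3 : A * y3 ≤ A * (y1/100) := mul_le_mul_of_nonneg_left k2 hA.le
  have k4 : B * y2 ≤ 0 := mul_nonpos_of_nonneg_of_nonpos hB k1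
  have k5 := mul_nonneg hp hy.le
  have k6 : D * y0 ≤ D * (-10 * y1) := by linarith
  have k7 : y0 ≤ -10 * y1 := le_of_mul_le_mul_left k6 hD
  refine ⟨mul_nonpos_of_nonpos_of_nonneg (by linarith) hy.le, ?_⟩
  rw [abs_of_pos hy, abs_of_nonpos (by linarith)]
  linarith

lemma cone_step (A E D B y0 y1 y2 y3 : ℝ) (hA : 0 < A) (hD : 0 < D) (hB : 0 ≤ B)
    (hp : 0 ≤ E - A/100 - 10*D) (h : A * y3 + B * y2 - E * y1 - D * y0 = 0)
    (c1 : Cone y1 y2) (c2 : Cone y2 y3) : Cone y0 y1 := by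
  rcases lt_trichotomy y1 0 with hy | hy | hy
  · have := cone_step_pos A E D B (-y0) (-y1) (-y2) (-y3) hA hD hB hp (by linarith)
      (cone_neg _ _ c1) (cone_neg _ _ c2) (by linarith)
    simpa using cone_neg _ _ this
  · subst hy
    unfold Cone; simp
  · exact cone_step_pos A E D B y0 y1 y2 y3 hA hD hB hp h c1 c2 hy

lemma no_small (y : ℕ → ℝ) (h : RecR y) (h1 : 0 < y 1) (h2 : 0 < y 2) (m : ℝ) (hm : m < 0)
    (hm' : -(1/10) < m) (hne : ∀ᶠ n in atTop, y (n+1) ≠ 0)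
    (ht : Tendsto (fun n => y (n+1+1) / y (n+1)) atTop (nhds m)) : False := by
  have e1 := ht.eventually (lt_mem_nhds hm')
  have e2 := ht.eventually (gt_mem_nhds hm)
  obtain ⟨N, hN⟩ := eventually_atTop.1 (hne.and (e1.and e2))
  have hc : ∀ n, N ≤ n → Cone (y (n+1)) (y (n+2)) := by
    intro n hn
    obtain ⟨a1, a2, a3⟩ := hN n hn
    set r := y (n+1+1) / y (n+1) with hr
    have hy : y (n+2) = r * y (n+1) := by rw [hr, div_mul_cancel₀ _ a1]
    rw [hy]
    constructor
    · nlinarith [mul_self_nonneg (y (n+1))]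
    · rw [abs_mul, abs_of_neg a3]
      nlinarith [abs_nonneg (y (n+1))]
  have hdown : ∀ n, (Cone (y (n+1)) (y (n+2)) ∧ Cone (y (n+2)) (y (n+3))) →
      Cone (y 1) (y 2) := by
    intro n
    induction n with
    | zero => exact fun hh => hh.1
    | succ n ih =>
      intro hh
      apply ih
      refine ⟨?_, hh.1⟩
      obtain ⟨p1, p2, p3, p4, p5, p6⟩ := poly_pos (n+1) (by omega)
      exact cone_step _ _ _ _ _ _ _ _ p1 p3 p4 p6 (h (n+1) (by omega)) hh.1 hh.2
  have := (hdown N ⟨hc N le_rfl, hc (N+1) (by omega)⟩).1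
  exact absurd this (not_le.2 (mul_pos h1 h2))

lemma no_large (y : ℕ → ℝ) (K : ℝ) (hK : ∀ n : ℕ, |y (n+1)| ≤ K * (((n:ℝ)+1)^2 * 1000^n)) (m : ℝ)
    (hm : m < -2000) (hne : ∀ᶠ n in atTop, y (n+1) ≠ 0)
    (ht : Tendsto (fun n => y (n+1+1) / y (n+1)) atTop (nhds m)) : False := by
  let v : ℕ → ℝ := fun n => (((n:ℝ)+1)^2 * 1000^n) / y (n+1)
  have hv0 : ∀ᶠ n in atTop, v n ≠ 0 := by
    filter_upwards [hne] with n hn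
    exact div_ne_zero (by positivity) hn
  have hr : Tendsto (fun n : ℕ => (1 + 1/((n:ℝ)+1))^2 * 1000 / |y (n+1+1) / y (n+1)|) atTop
      (nhds ((1 + 0)^2 * 1000 / |m|)) := by
    refine Tendsto.div ?_ ht.abs (abs_ne_zero.2 (by linarith))
    exact ((tendsto_one_div_add_atTop_nhds_zero_nat.const_add 1).pow 2).mul_const 1000
  have hlt : (1 + 0)^2 * 1000 / |m| < 1 := by
    rw [div_lt_one (abs_pos.2 (by linarith)), abs_of_neg (by linarith)]
    linarith
  have hs : Summable v := by
    refine summable_of_ratio_test_tendsto_lt_one hlt hv0 (hr.congr' ?_)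
    filter_upwards [hne, (eventually_ge_atTop 0)] with n hn _
    simp only [v, Real.norm_eq_abs]
    rw [abs_div, abs_div, abs_div, abs_of_pos (show 0 < ((n:ℝ)+1)^2 * 1000^n by positivity),
      abs_of_pos (show 0 < (((n+1:ℕ):ℝ)+1)^2 * 1000^(n+1) by positivity)]
    have := abs_ne_zero.2 hn
    by_cases h2 : |y (n+1+1)| = 0
    · rw [h2]; simp
    push_cast
    field_simp
    ring
  have h0 := hs.tendsto_atTop_zero
  have hKv := (h0.abs.const_mul K)
  rw [abs_zero, mul_zero] at hKv
  have := hKv.eventually (gt_mem_nhds (zero_lt_one))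
  obtain ⟨n, hn1, hn2⟩ := (this.and hne).exists
  have hp : 0 < |y (n+1)| := abs_pos.2 hn2
  simp only [v] at hn1
  rw [abs_div, abs_of_pos (show 0 < ((n:ℝ)+1)^2 * 1000^n by positivity), ← mul_div_assoc,
    div_lt_one hp] at hn1
  exact absurd (hK n) (not_le.2 hn1)

/-! Numerical bounds for `ζ(5)`. -/

lemma zeta5_lower : (1.036:ℝ) < zetaRe 5 := by
  have h := sum_le_hasSum (Finset.range 4) (fun k _ => by positivity) zeta5_hasSum
  norm_num [Finset.sum_range_succ] at h ⊢
  linarith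

lemma zeta5_upper : zetaRe 5 < 1190161/(64*17934) := by
  let S : ℕ → ℝ := fun n => ∑ k ∈ Finset.range n, 1 / ((k:ℝ)+1)^5
  let g : ℕ → ℝ := fun n => S n + 1 / (4*((n:ℝ)+1/2)^4)
  have hS : Tendsto S atTop (nhds (zetaRe 5)) := zeta5_hasSum.tendsto_sum_nat
  have hg : Antitone g := by
    apply antitone_nat_of_succ_le
    intro n
    simp only [g, S, Finset.sum_range_succ]
    push_cast
    have hn := n.cast_nonneg (α := ℝ)
    generalize (n:ℝ) = t at *
    have key : 1/(t+1)^5 ≤ 1/(4*(t+1/2)^4) - 1/(4*(t+1+1/2)^4) := by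
      rw [div_sub_div _ _ (by positivity) (by positivity), div_le_div_iff₀ (by positivity) (by positivity),
        ← sub_nonneg]
      ring_nf
      positivity
    linarith
  have h12 : zetaRe 5 ≤ g 12 := by
    refine le_of_tendsto hS ?_
    filter_upwards [eventually_ge_atTop 12] with n hn
    refine le_trans ?_ (hg hn)
    simp only [g]
    have : 0 ≤ 1 / (4*((n:ℝ)+1/2)^4) := by positivity
    linarith
  refine lt_of_le_of_lt h12 ?_
  simp only [g, S]
  norm_num [Finset.sum_range_succ]
/-! The linear forms. -/

lemma recR_lin (q p : ℕ → ℝ) (c : ℝ) (hq : RecR q) (hp : RecR p) :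
    RecR (fun n => q n * c - p n) := by
  intro m hm
  have h1 := hq m hm
  have h2 := hp m hm
  linear_combination c * h1 - h2

lemma value_three (y : ℕ → ℚ) (h : Rec1 y) : 
    729 * a0 2 * y 3 + a1 2 * y 2 - 12 * a2 2 * y 1 - 12 * a0 3 * y 0 = 0 := by
  have := h 2 le_rfl
  norm_num at this
  linarith

def W : ℕ → ℝ × ℝ × ℝ := vec (66, -24, 10)

lemma lin_form (q p : ℕ → ℚ) (hq : Rec1 q) (hp : Rec1 p)
    (hq1 : q 1 = 42) (hq2 : q 2 = -17934) (hq3 : q 3 = 14290980)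
    (hp1 : p 1 = 87/2) (hp2 : p 2 = -1190161/64) (hp3 : p 3 = 38410106195/2592) (n : ℕ) :
    (q (n+1) : ℝ) * zetaRe 5 - p (n+1)
      = -1/4 * (rr 0 (n+1) * (W (n+1)).2.1 - rr 1 (n+1) * (W (n+1)).1) := by
  have hL := recR_lin _ _ (zetaRe 5) (recR_of_rec1 q hq) (recR_of_rec1 p hp)
  have hW := vec_sys (66, -24, 10)
  have hwr := wedge_rec _ _ _ _ _ _ rr_sys hW
  have w1 : vec (66, -24, 10) 1 = (66, -24, 10) := vec_one _
  obtain ⟨x2, y2, z2⟩ := wedge_step _ _ _ _ _ _ rr_sys hW 1 le_rfl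
  obtain ⟨x3, -, -⟩ := wedge_step _ _ _ _ _ _ rr_sys hW 2 (by norm_num)
  simp only [w1, rr0_one, rr1_one, rr2_one, pXX, pXY, pXZ, pYX, pYY, pYZ, pZX, pZY, pZZ,
    Nat.cast_one, Nat.cast_ofNat, show 1 + 1 = 2 from rfl, show 2 + 1 = 3 from rfl] at x2 y2 z2 x3
  refine (recR_unique _ _ hL hwr ?_ ?_ ?_ n).1
  · simp only [hq1, hp1, w1, rr0_one, rr1_one]
    push_cast
    ring
  · simp only [hq2, hp2]
    push_cast
    linear_combination (1/256) * x2
  · simp only [hq3, hp3]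
    push_cast
    linear_combination (1/2916) * x3 + (1/2916) * (-455382/64 * x2 + 27612/16 * y2 - 1740/4 * z2)

lemma lin_bound (q p : ℕ → ℚ) (hq : Rec1 q) (hp : Rec1 p)
    (hq1 : q 1 = 42) (hq2 : q 2 = -17934) (hq3 : q 3 = 14290980)
    (hp1 : p 1 = 87/2) (hp2 : p 2 = -1190161/64) (hp3 : p 3 = 38410106195/2592) :
    ∃ K : ℝ, ∀ n : ℕ, |(q (n+1) : ℝ) * zetaRe 5 - p (n+1)| ≤ K * (((n:ℝ)+1)^2 * 1000^n) := by
  set M : ℝ := ∑' k : ℕ, 12 * (1 / ((k:ℝ)+1)^2) with hM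
  have hM0 : 0 ≤ M := tsum_nonneg fun k => by positivity
  refine ⟨M * 100, fun n => ?_⟩
  rw [lin_form q p hq hp hq1 hq2 hq3 hp1 hp2 hp3 n]
  have w1 : vec (66, -24, 10) 1 = (66, -24, 10) := vec_one _
  obtain ⟨k1, k2, -⟩ := sys_bound _ _ _ (vec_sys (66, -24, 10)) 100 (by norm_num)
    (by simp only [w1]; norm_num) (by simp only [w1]; norm_num [abs_of_pos])
    (by simp only [w1]; norm_num) n
  have r0 := rr_bound 0 n (by norm_num)
  have r1 := rr_bound 1 n (by norm_num)
  rw [← hM] at r0 r1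
  unfold W
  have hn : (1:ℝ) ≤ ((n:ℝ)+1)^2 := one_le_pow₀ (by linarith [n.cast_nonneg (α := ℝ)])
  have hp : (0:ℝ) < 1000^n := by positivity
  set X := (vec (66, -24, 10) (n+1)).1
  set Y := (vec (66, -24, 10) (n+1)).2.1
  set T := ((n:ℝ)+1)^2 * 1000^n with hT
  have k1' : |X| ≤ 100 * T := k1.trans (by rw [hT]; nlinarith)
  have k2' : |Y| ≤ 100 * T := k2.trans (by rw [hT]; linarith)
  have m1 : |rr 0 (n+1) * Y| ≤ M * (100 * T) := by
    rw [abs_mul]; exact mul_le_mul r0 k2' (abs_nonneg _) hM0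
  have m2 : |rr 1 (n+1) * X| ≤ M * (100 * T) := by
    rw [abs_mul]; exact mul_le_mul r1 k1' (abs_nonneg _) hM0
  have hT0 : 0 ≤ M * (100 * T) := (abs_nonneg _).trans m1
  have := abs_sub (rr 0 (n+1) * Y) (rr 1 (n+1) * X)
  rw [abs_mul, show |(-1/4:ℝ)| = 1/4 by norm_num [abs_of_neg]]
  linarith

/-- `p_n/q_n → ζ(5)`; more precisely `lim (log |ζ(5) − p_n/q_n|)/n = log |μ₂/μ₃|`, where
`μ₂` is the root of `μ³ + 2368 μ² − 752 μ − 16` in `(0.337, 0.338)` and `μ₃` is its root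
in `(−2369, −2368)`. -/
theorem stmt4
    (q p : ℕ → ℚ)
    (hq : Rec1 q) (hp : Rec1 p)
    (hq0 : q 0 = -1) (hq1 : q 1 = 42) (hq2 : q 2 = -17934)
    (hp0 : p 0 = 0) (hp1 : p 1 = 87/2) (hp2 : p 2 = -1190161/64)
    (μ2 : ℝ) (hμ2root : μ2^3 + 2368*μ2^2 - 752*μ2 - 16 = 0)
    (hμ2mem : μ2 ∈ Set.Ioo (0.337 : ℝ) 0.338)
    (μ3 : ℝ) (hμ3root : μ3^3 + 2368*μ3^2 - 752*μ3 - 16 = 0)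
    (hμ3mem : μ3 ∈ Set.Ioo (-2369 : ℝ) (-2368)) :
    Tendsto (fun n : ℕ => ((p n / q n : ℚ) : ℝ)) atTop (nhds (zetaRe 5)) ∧
    Tendsto (fun n : ℕ => Real.log |zetaRe 5 - ((p n / q n : ℚ) : ℝ)| / (n : ℝ))
      atTop (nhds (Real.log |μ2 / μ3|)) := by
  have hq3 : q 3 = 14290980 := by
    have := value_three q hq
    rw [hq0, hq1, hq2] at this
    norm_num [a0, a1, a2] at this
    linarith
  have hp3 : p 3 = 38410106195/2592 := by
    have := value_three p hp
    rw [hp0, hp1, hp2] at this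
    norm_num [a0, a1, a2] at this
    linarith
  obtain ⟨a1, a2⟩ := hμ2mem
  obtain ⟨a3, a4⟩ := hμ3mem
  -- the third root
  obtain ⟨m1, hm1⟩ : ∃ m1 : ℝ, m1 = -2368 - μ2 - μ3 := ⟨_, rfl⟩
  have hs : μ2^2 + μ2*μ3 + μ3^2 + 2368*(μ2+μ3) - 752 = 0 := by
    have h : (μ2 - μ3) * (μ2^2 + μ2*μ3 + μ3^2 + 2368*(μ2+μ3) - 752) = 0 := by
      linear_combination hμ2root - hμ3root
    rcases mul_eq_zero.1 h with h | h
    · norm_num at a1 a2; linarith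
    · exact h
  have s1 : m1 + μ2 + μ3 = -2368 := by rw [hm1]; ring
  have s2 : m1*μ2 + m1*μ3 + μ2*μ3 = -752 := by rw [hm1]; linear_combination -hs
  have s3 : m1*μ2*μ3 = 16 := by rw [hm1]; linear_combination hμ2root - μ2 * hs
  have a1' : (1/3:ℝ) < μ2 := by norm_num at a1 ⊢; linarith
  have a2' : μ2 < 1 := by norm_num at a2 ⊢; linarith
  have hprod : μ2 * μ3 < -700 := by nlinarith
  have c1 : m1 < 0 := by
    by_contra hh; push Not at hh
    have := mul_nonneg hh (show (0:ℝ) ≤ -(μ2*μ3) by linarith)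
    linarith
  have c2 : -(1/10) < m1 := by
    by_contra hh; push Not at hh
    have := mul_nonneg (show (0:ℝ) ≤ -(1/10) - m1 by linarith) (show (0:ℝ) ≤ -(μ2*μ3) by linarith)
    linarith
  have h12 : |m1| < |μ2| := by
    rw [abs_of_neg c1, abs_of_pos (by linarith)]; linarith
  have h23 : |μ2| < |μ3| := by
    rw [abs_of_pos (by linarith), abs_of_neg (by linarith)]; linarith
  set Q : ℕ → ℝ := fun n => (q n : ℝ) with hQ
  set L : ℕ → ℝ := fun n => (q n : ℝ) * zetaRe 5 - p n with hL
  have hQr : RecR Q := recR_of_rec1 q hq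
  have hLr : RecR L := recR_lin _ _ (zetaRe 5) (recR_of_rec1 q hq) (recR_of_rec1 p hp)
  have Q1 : Q 1 = 42 := by simp only [hQ, hq1]; norm_num
  have Q2 : Q 2 = -17934 := by simp only [hQ, hq2]; norm_num
  have Q3 : Q 3 = 14290980 := by simp only [hQ, hq3]; norm_num
  have L1 : 0 < L 1 := by
    simp only [hL, hq1, hp1]; have := zeta5_lower; norm_num at this ⊢; linarith
  have L2 : 0 < L 2 := by
    simp only [hL, hq2, hp2]; have := zeta5_upper; norm_num at this ⊢; linarith
  -- growth of the denominators
  have gQ := growth Q hQr (by rw [Q1, Q2, abs_of_pos, abs_of_neg] <;> norm_num)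
    (by rw [Q2, Q3, abs_of_neg, abs_of_pos] <;> norm_num)
  have hQne : ∀ n, Q (n+1) ≠ 0 := by
    intro n
    induction n with
    | zero => rw [zero_add, Q1]; norm_num
    | succ n ih =>
      have := (gQ n).1
      have h0 := abs_pos.2 ih
      exact abs_pos.1 (by linarith)
  have tQ : Tendsto (fun n => Q (n+1+1) / Q (n+1)) atTop (nhds μ3) := by
    have hbig : ∀ n, 10 ≤ |Q (n+1+1) / Q (n+1)| := by
      intro n
      rw [abs_div, le_div_iff₀ (abs_pos.2 (hQne n))]
      exact (gQ n).1
    have hno : ∀ m : ℝ, |m| < 10 → ¬ Tendsto (fun n => Q (n+1+1) / Q (n+1)) atTop (nhds m) := by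
      intro m hm ht
      exact absurd (ge_of_tendsto' ht.abs hbig) (not_le.2 hm)
    rcases (recR_poincare Q hQr (hQne 0) m1 μ2 μ3 h12 h23 s1 s2 s3).2 with h | h | h
    · exact absurd h (hno _ (by rw [abs_of_neg c1]; linarith))
    · exact absurd h (hno _ (by rw [abs_of_pos (by linarith)]; linarith))
    · exact h
  -- decay of the linear forms
  obtain ⟨hLne, hLt⟩ := recR_poincare L hLr L1.ne' m1 μ2 μ3 h12 h23 s1 s2 s3
  have tL : Tendsto (fun n => L (n+1+1) / L (n+1)) atTop (nhds μ2) := by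
    obtain ⟨K, hK⟩ := lin_bound q p hq hp hq1 hq2 hq3 hp1 hp2 hp3
    rcases hLt with h | h | h
    · exact (no_small L hLr L1 L2 m1 c1 c2 hLne h).elim
    · exact h
    · exact (no_large L K hK μ3 (by linarith) hLne h).elim
  have hLne' : ∀ᶠ n in atTop, L n ≠ 0 := by
    obtain ⟨N, hN⟩ := eventually_atTop.1 hLne
    filter_upwards [eventually_ge_atTop (N+1)] with n hn
    obtain ⟨k, rfl⟩ := Nat.exists_eq_add_of_le' (show 1 ≤ n by omega)
    exact hN k (by omega)
  have hQne' : ∀ᶠ n in atTop, Q n ≠ 0 := by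
    filter_upwards [eventually_ge_atTop 1] with n hn
    obtain ⟨k, rfl⟩ := Nat.exists_eq_add_of_le' hn
    exact hQne k
  have tQ' : Tendsto (fun n => Q (n+1) / Q n) atTop (nhds μ3) := (tendsto_add_atTop_iff_nat 1).1 tQ
  have tL' : Tendsto (fun n => L (n+1) / L n) atTop (nhds μ2) := (tendsto_add_atTop_iff_nat 1).1 tL
  have n3 : μ3 ≠ 0 := by linarith
  have n2 : μ2 ≠ 0 := by linarith
  have hdiff : ∀ n, Q n ≠ 0 → zetaRe 5 - ((p n / q n : ℚ) : ℝ) = L n / Q n := by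
    intro n hn
    simp only [hL, hQ] at *
    push_cast
    field_simp
  have hzero : Tendsto (fun n => L n / Q n) atTop (nhds 0) := by
    have hr : Tendsto (fun n => ‖L (n+1) / Q (n+1)‖ / ‖L n / Q n‖) atTop (nhds |μ2 / μ3|) := by
      refine (tL'.div tQ' n3).abs.congr fun n => ?_
      simp only [Real.norm_eq_abs, Pi.div_apply]
      rw [← abs_div]
      congr 1
      rw [div_div_div_eq, div_div_div_eq, mul_comm (L n) (Q (n+1)), mul_comm (Q (n+1)) (L n)]
    have hlt : |μ2 / μ3| < 1 := by
      rw [abs_div, div_lt_one (abs_pos.2 n3)]; exact h23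
    refine (summable_of_ratio_test_tendsto_lt_one hlt ?_ hr).tendsto_atTop_zero
    filter_upwards [hLne', hQne'] with n h1 h2
    exact div_ne_zero h1 h2
  constructor
  · have h := hzero.const_sub (zetaRe 5)
    rw [sub_zero] at h
    refine h.congr' ?_
    filter_upwards [hQne'] with n hn
    rw [← hdiff n hn]; ring
  · have g1 := log_growth L μ2 n2 hLne' tL'
    have g2 := log_growth Q μ3 n3 hQne' tQ'
    have g := g1.sub g2
    rw [abs_div, Real.log_div (abs_ne_zero.2 n2) (abs_ne_zero.2 n3)]
    refine g.congr' ?_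
    filter_upwards [hLne', hQne'] with n h1 h2
    rw [hdiff n h2, abs_div, Real.log_div (abs_ne_zero.2 h1) (abs_ne_zero.2 h2)]
    ring
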